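/- arXiv:1008.2368 — 2 statements merged into one kernel-verified Lean document; each statement's English description precedes it below -/
import Mathlib

section
/- Let q be a prime power with q ≥ 5 and X ⊂ P³ an elliptic quadric over F_q with equation F = 0. Consider the code C_L(X, O_X(3)) obtained by evaluating the homogeneous cubic polynomials in F_q[x,y,z,t] (taken modulo multiples of F) at the q² + 1 points of X(F_q). This code has length q² + 1, dimension 16 (the evaluation map on the degree-3 graded piece of F_q[x,y,z,t]/(F) is injective), and minimum distance at least δ = q² + 1 − max(3q + 3, min(4q, q + 1 + 4·⌊2√q⌋)); explicitly, δ = q² + 1 − 4q if 5 ≤ q ≤ 7, δ = q² − q − 4⌊2√q⌋ if 8 ≤ q ≤ 13, and δ = q² − 2 − 3q if q ≥ 16. -/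
open MvPolynomial

noncomputable section

/-- `Fp` defines an elliptic quadric in `P³` over the finite field `F`: it is a nonzero
quadratic form, the quadric it defines is smooth (over the algebraic closure the gradient
vanishes at no nonzero point of the quadric), and the quadric contains no `F`-rational
projective line. -/
def IsEllipticQuadric (F : Type) [Field F] (Fp : MvPolynomial (Fin 4) F) : Prop :=
  Fp ≠ 0 ∧ Fp.IsHomogeneous 2 ∧
  (∀ v : Fin 4 → AlgebraicClosure F, v ≠ 0 → MvPolynomial.aeval v Fp = 0 →
      ∃ i, MvPolynomial.aeval v (MvPolynomial.pderiv i Fp) ≠ 0) ∧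
  ¬ ∃ u w : Fin 4 → F, LinearIndependent F ![u, w] ∧
      ∀ a b : F, MvPolynomial.eval (a • u + b • w) Fp = 0

/-- The evaluation map sending a polynomial to its vector of values at (the chosen
representatives of) the points of `pts`. -/
def evalAt (F : Type) [Field F] (pts : Set (Projectivization F (Fin 4 → F))) :
    MvPolynomial (Fin 4) F →ₗ[F] (pts → F) :=
  LinearMap.pi fun x => (MvPolynomial.aeval x.1.rep).toLinearMap

lemma hom_eval_smul {F : Type} [Field F] {f : MvPolynomial (Fin 4) F} {n : ℕ}
    (h : f.IsHomogeneous n) (c : F) (v : Fin 4 → F) : eval (c • v) f = c ^ n * eval v f := by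
  rw [eval_eq', eval_eq', Finset.mul_sum]
  refine Finset.sum_congr rfl fun d hd => ?_
  have hn : ∑ i, d i = n := by
    have hd' : d.degree = n := by
      by_contra hne
      exact (mem_support_iff.1 hd) (h.coeff_eq_zero hne)
    rw [← hd', Finsupp.degree_eq_sum]
  simp only [Pi.smul_apply, smul_eq_mul, mul_pow, Finset.prod_mul_distrib]
  rw [Finset.prod_pow_eq_pow_sum, hn]
  ring

lemma hom2_matrix {F : Type} [Field F] {Fp : MvPolynomial (Fin 4) F} (h : Fp.IsHomogeneous 2) :
    ∃ A : Fin 4 → Fin 4 → F, Fp = ∑ i, ∑ j, C (A i j) * (X i * X j) := by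
  have h1 : Fp ∈ homogeneousSubmodule (Fin 4) F 2 := h
  rw [← homogeneousSubmodule_one_pow, homogeneousSubmodule_one_eq_span_X, pow_two,
    Submodule.span_mul_span] at h1
  clear h
  induction h1 using Submodule.span_induction with
  | mem x hx =>
    obtain ⟨_, ⟨i, rfl⟩, _, ⟨j, rfl⟩, rfl⟩ := hx
    refine ⟨fun a b => if a = i ∧ b = j then 1 else 0, ?_⟩
    simp [Finset.sum_ite_eq, ite_and, apply_ite C, ite_mul]
  | zero => exact ⟨fun _ _ => 0, by simp⟩
  | add x y _ _ hx hy =>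
    obtain ⟨A, hA⟩ := hx
    obtain ⟨B, hB⟩ := hy
    refine ⟨fun i j => A i j + B i j, ?_⟩
    conv_lhs => rw [hA, hB]
    simp [add_mul, Finset.sum_add_distrib]
  | smul a x _ hx =>
    obtain ⟨A, hA⟩ := hx
    refine ⟨fun i j => a * A i j, ?_⟩
    conv_lhs => rw [hA]
    simp [Finset.smul_sum, smul_eq_C_mul, mul_assoc]

lemma quad_data {F : Type} [Field F] {Fp : MvPolynomial (Fin 4) F} (h : Fp.IsHomogeneous 2) :
    ∃ B : LinearMap.BilinForm F (Fin 4 → F),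
      (∀ v w, eval (v + w) Fp = eval v Fp + eval w Fp + B v w) ∧
      (∀ v w, B v w = B w v) ∧ (∀ v, B v v = 2 * eval v Fp) ∧
      (∀ v k, eval v (pderiv k Fp) = B v (Pi.single k 1)) := by
  obtain ⟨A, rfl⟩ := hom2_matrix h
  let M : LinearMap.BilinForm F (Fin 4 → F) := Matrix.toBilin' (Matrix.of A)
  have hM : ∀ v w, M v w = ∑ i, ∑ j, v i * A i j * w j := fun v w => by
    simp [M, Matrix.toBilin'_apply]
  refine ⟨M + M.flip, ?_, ?_, ?_, ?_⟩
  · intro v w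
    simp only [map_sum, map_mul, eval_C, eval_X, LinearMap.add_apply, LinearMap.BilinForm.flip_apply, hM,
      ← Finset.sum_add_distrib, Pi.add_apply]
    refine Finset.sum_congr rfl fun i _ => Finset.sum_congr rfl fun j _ => ?_
    ring
  · intro v w
    simp [add_comm]
  · intro v
    simp only [map_sum, map_mul, eval_C, eval_X, LinearMap.add_apply, LinearMap.BilinForm.flip_apply, hM,
      Finset.mul_sum, ← Finset.sum_add_distrib]
    refine Finset.sum_congr rfl fun i _ => Finset.sum_congr rfl fun j _ => ?_
    ring
  · intro v k
    simp only [map_sum, LinearMap.add_apply, LinearMap.BilinForm.flip_apply, hM,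
      Derivation.leibniz, pderiv_C, pderiv_X, smul_eq_mul, map_add, map_mul, eval_C, eval_X]
    simp only [Pi.single_apply, mul_ite, ite_mul, mul_one, mul_zero, zero_mul, one_mul, mul_add,
      Finset.sum_add_distrib, Finset.sum_ite_eq, Finset.sum_ite_eq', Finset.mem_univ, if_true,
      Finset.sum_ite_irrel, Finset.sum_const_zero, map_zero, add_zero, apply_ite (eval v), map_one]
    simp [mul_comm]

lemma exists_basis {F : Type} [Field F] {Fp : MvPolynomial (Fin 4) F}
    (hX : IsEllipticQuadric F Fp) (e : Fin 4 → F) (he : e ≠ 0) (hQ : eval e Fp = 0) :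
    ∃ (b : Module.Basis (Fin 4) F (Fin 4 → F)) (α β γ : F), b 1 = e ∧
      (∀ z t : F, α * z ^ 2 + β * z * t + γ * t ^ 2 = 0 → z = 0 ∧ t = 0) ∧
      ∀ x y z t : F, eval (x • b 0 + y • b 1 + z • b 2 + t • b 3) Fp =
        x * y + (α * z ^ 2 + β * z * t + γ * t ^ 2) := by
  obtain ⟨-, hom, hsm, hline⟩ := hX
  obtain ⟨B, hadd, hsymm, hdiag, hder⟩ := quad_data hom
  have hsc : ∀ (c : F) v, eval (c • v) Fp = c ^ 2 * eval v Fp := fun c v => by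
    exact hom_eval_smul hom c v
  have hex : ∃ k, B e (Pi.single k 1) ≠ 0 := by
    obtain ⟨k, hk⟩ := hsm (fun i => algebraMap F _ (e i))
      (fun h0 => he (funext fun i => by simpa using congrFun h0 i))
      (by
        have := aeval_algebraMap_apply (AlgebraicClosure F) e Fp
        simp only [Function.comp_def, aeval_eq_eval] at this
        exact this.trans (by simp [hQ]))
    refine ⟨k, fun h0 => hk ?_⟩
    rw [← hder] at h0
    have := aeval_algebraMap_apply (AlgebraicClosure F) e (pderiv k Fp)
    simp only [Function.comp_def, aeval_eq_eval] at this
    exact this.trans (by simp [h0])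
  obtain ⟨k, hk⟩ := hex
  set w : Fin 4 → F := Pi.single k 1
  obtain ⟨e1, hQ1, hB1⟩ : ∃ e1, eval e1 Fp = 0 ∧ B e e1 = 1 := by
    refine ⟨(B e w)⁻¹ • w + (-(eval w Fp * ((B e w)⁻¹) ^ 2)) • e, ?_, ?_⟩
    · rw [hadd, hsc, hsc, hQ]
      simp only [map_smul, LinearMap.smul_apply, smul_eq_mul, hsymm w e]
      field_simp
      ring
    · simp [hdiag, hQ, hk]
  let φ : (Fin 4 → F) →ₗ[F] F × F := (B e).prod (B e1)
  have hφ : Function.Surjective φ := by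
    rintro ⟨a, c⟩
    refine ⟨a • e1 + c • e, ?_⟩
    simp [φ, hB1, hsymm e1 e, hdiag, hQ, hQ1]
  have hker : Module.finrank F (LinearMap.ker φ) = 2 := by
    have := LinearMap.finrank_range_add_finrank_ker φ
    rw [LinearMap.range_eq_top.2 hφ] at this
    simp at this
    omega
  let bw := Module.finBasisOfFinrankEq F (LinearMap.ker φ) hker
  have hb0 : ∀ i, B e (bw i) = 0 ∧ B e1 (bw i) = 0 := fun i => by
    have := (bw i).2
    simpa [φ, LinearMap.mem_ker] using this
  have hli : LinearIndependent F ![e1, e, (bw 0 : Fin 4 → F), (bw 1 : Fin 4 → F)] := by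
    rw [Fintype.linearIndependent_iff]
    intro g hg
    simp only [Fin.sum_univ_four, Matrix.cons_val] at hg
    have h0 : g 0 = 0 := by
      have := congrArg (B e) hg
      simpa [hB1, hdiag, hQ, hb0] using this
    have h1 : g 1 = 0 := by
      have := congrArg (B e1) hg
      simpa [hB1, hdiag, hQ1, hb0, hsymm e1 e] using this
    rw [h0, h1] at hg
    have h23 := Fintype.linearIndependent_iff.1 bw.linearIndependent ![g 2, g 3] (by
      apply Subtype.ext
      simpa [Fin.sum_univ_two] using hg)
    intro i
    fin_cases i
    · exact h0
    · exact h1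
    · exact h23 0
    · exact h23 1
  let b : Module.Basis (Fin 4) F (Fin 4 → F) :=
    basisOfLinearIndependentOfCardEqFinrank hli (by simp)
  have hb : ∀ i, b i = ![e1, e, (bw 0 : Fin 4 → F), (bw 1 : Fin 4 → F)] i := fun i => by
    simp [b]
  have hform : ∀ x y z t : F, eval (x • b 0 + y • b 1 + z • b 2 + t • b 3) Fp =
        x * y + (eval (b 2) Fp * z ^ 2 + B (b 2) (b 3) * z * t + eval (b 3) Fp * t ^ 2) := by
    intro x y z t
    simp only [hadd, hsc]
    simp [hb, hQ, hQ1, hB1, hb0, hsymm e1 e]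
    ring
  refine ⟨b, eval (b 2) Fp, B (b 2) (b 3), eval (b 3) Fp, by simp [hb], ?_, hform⟩
  intro z t hzt
  by_contra hne
  apply hline
  refine ⟨e, z • b 2 + t • b 3, ?_, ?_⟩
  · rw [LinearIndependent.pair_iff]
    intro c d hcd
    have := Fintype.linearIndependent_iff.1 b.linearIndependent ![0, c, d * z, d * t] (by
      simp [Fin.sum_univ_four]
      rw [← hcd]
      simp [hb, smul_smul, add_assoc])
    have h1 := this 1
    have h2 := this 2
    have h3 := this 3
    simp at h1 h2 h3
    tauto
  · intro c d
    have h5 := hform 0 c (d * z) (d * t)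
    have h6 : c • e + d • (z • b 2 + t • b 3) =
      (0 : F) • b 0 + c • b 1 + (d * z) • b 2 + (d * t) • b 3 := by
      simp [hb, smul_smul, add_assoc]
    rw [h6, h5]
    linear_combination d ^ 2 * hzt

lemma mem_of_pow_card {F L : Type} [Field F] [Fintype F] [Field L] [Algebra F L] (x : L)
    (hx : x ^ Fintype.card F = x) : ∃ a : F, algebraMap F L a = x := by
  have h := FiniteField.X_pow_card_sub_X_natDegree_eq L (p := Fintype.card F)
    (Fintype.one_lt_card)
  have h0 : (Polynomial.X ^ Fintype.card F - Polynomial.X : Polynomial L) ≠ 0 :=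
    FiniteField.X_pow_card_sub_X_ne_zero L Fintype.one_lt_card
  classical
  by_contra hne
  push Not at hne
  let S : Finset L := insert x (Finset.univ.image (algebraMap F L))
  have hS : S.card = Fintype.card F + 1 := by
    rw [Finset.card_insert_of_notMem, Finset.card_image_of_injective _ (algebraMap F L).injective,
      Finset.card_univ]
    simpa using hne
  have hz : (Polynomial.X ^ Fintype.card F - Polynomial.X : Polynomial L) = 0 := by
    apply Polynomial.eq_zero_of_natDegree_lt_card_of_eval_eq_zero' _ S
    · intro i hi
      simp only [S, Finset.mem_insert, Finset.mem_image, Finset.mem_univ, true_and] at hi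
      rcases hi with rfl | ⟨a, rfl⟩
      · simp [hx]
      · simp [← map_pow, FiniteField.pow_card]
    · rw [h, hS]; omega
  exact h0 hz

lemma exists_theta {F : Type} [Field F] [Fintype F] (α β γ : F)
    (h : ∀ z t : F, α * z ^ 2 + β * z * t + γ * t ^ 2 = 0 → z = 0 ∧ t = 0) :
    ∃ θ : AlgebraicClosure F, θ ^ Fintype.card F ≠ θ ∧ α ≠ 0 ∧ ∀ z t : F,
      algebraMap F (AlgebraicClosure F) (α * z ^ 2 + β * z * t + γ * t ^ 2) =
        algebraMap F _ α * (algebraMap F _ z - θ * algebraMap F _ t) *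
          (algebraMap F _ z - θ ^ Fintype.card F * algebraMap F _ t) := by
  have hα : α ≠ 0 := fun h0 => by
    have := h 1 0 (by simp [h0])
    simp at this
  set g := algebraMap F (AlgebraicClosure F)
  have hgα : g α ≠ 0 := by simpa [g] using hα
  obtain ⟨θ, hθ⟩ := IsAlgClosed.exists_root (k := AlgebraicClosure F)
    (Polynomial.C (g α) * Polynomial.X ^ 2 + Polynomial.C (g β) * Polynomial.X +
      Polynomial.C (g γ)) (by rw [Polynomial.degree_quadratic hgα]; decide)
  simp only [Polynomial.IsRoot.def, Polynomial.eval_add, Polynomial.eval_mul, Polynomial.eval_C,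
    Polynomial.eval_pow, Polynomial.eval_X] at hθ
  have hne : θ ^ Fintype.card F ≠ θ := fun hc => by
    obtain ⟨a, ha⟩ := mem_of_pow_card (F := F) θ hc
    have := h a 1 (by
      apply (algebraMap F (AlgebraicClosure F)).injective
      simp only [map_add, map_mul, map_pow, ha, map_one, map_zero]
      simpa using hθ)
    simp at this
  refine ⟨θ, hne, hα, ?_⟩
  have hθ' := congrArg (FiniteField.frobeniusAlgHom F (AlgebraicClosure F)) hθ
  simp only [map_add, map_mul, map_pow, g, AlgHom.commutes, map_zero] at hθ'
  rw [FiniteField.coe_frobeniusAlgHom] at hθ'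
  simp only at hθ'
  set η := θ ^ Fintype.card F
  have hd : η - θ ≠ 0 := sub_ne_zero.2 hne
  have h1 : g β = - g α * (η + θ) := by
    apply mul_right_cancel₀ hd
    linear_combination hθ' - hθ
  have h2 : g γ = g α * η * θ := by
    linear_combination hθ - θ * h1
  intro z t
  simp only [map_add, map_mul, map_pow]
  change g α * g z ^ 2 + g β * g z * g t + g γ * g t ^ 2 = _
  rw [h1, h2]
  ring

/-- Normal form data for an elliptic quadric. -/
structure EQParam (F : Type) [Field F] [Fintype F] (Fp : MvPolynomial (Fin 4) F) where
  b : Module.Basis (Fin 4) F (Fin 4 → F)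
  α : F
  θ : AlgebraicClosure F
  N : F → F → F
  hα : α ≠ 0
  hθ : θ ^ Fintype.card F ≠ θ
  hN : ∀ z t : F, algebraMap F (AlgebraicClosure F) (N z t) =
    algebraMap F _ α * (algebraMap F _ z - θ * algebraMap F _ t) *
          (algebraMap F _ z - θ ^ Fintype.card F * algebraMap F _ t)
  haniso : ∀ z t, N z t = 0 → z = 0 ∧ t = 0
  heval : ∀ x y z t : F, eval (x • b 0 + y • b 1 + z • b 2 + t • b 3) Fp = x * y + N z t

lemma exists_param {F : Type} [Field F] [Fintype F] {Fp : MvPolynomial (Fin 4) F}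
    (hX : IsEllipticQuadric F Fp) (e : Fin 4 → F) (he : e ≠ 0) (hQ : eval e Fp = 0) :
    ∃ D : EQParam F Fp, D.b 1 = e := by
  obtain ⟨b, α, β, γ, hb, han, hev⟩ := exists_basis hX e he hQ
  obtain ⟨θ, h1, h2, h3⟩ := exists_theta α β γ han
  exact ⟨⟨b, α, θ, fun z t => α * z ^ 2 + β * z * t + γ * t ^ 2, h2, h1, h3, han, hev⟩, hb⟩

lemma exists_zero {F : Type} [Field F] [Fintype F] {Fp : MvPolynomial (Fin 4) F}
    (hX : IsEllipticQuadric F Fp) : ∃ e : Fin 4 → F, e ≠ 0 ∧ eval e Fp = 0 := by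
  classical
  obtain ⟨p, hp⟩ := CharP.exists F
  have hpp : p.Prime := CharP.char_is_prime F p
  have hom := hX.2.1
  have h := char_dvd_card_solutions p (f := Fp)
    (lt_of_le_of_lt hom.totalDegree_le (by simp))
  have h0 : eval (0 : Fin 4 → F) Fp = 0 := by
    have := hom_eval_smul hom 0 0
    simpa using this
  by_contra hne
  push Not at hne
  have : Fintype.card {x : Fin 4 → F // eval x Fp = 0} = 1 := by
    rw [Fintype.card_eq_one_iff]
    refine ⟨⟨0, h0⟩, fun y => Subtype.ext ?_⟩
    by_contra hy
    exact hne y.1 hy y.2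
  rw [this] at h
  exact hpp.one_lt.ne' (Nat.dvd_one.1 h)

namespace EQParam

variable {F : Type} [Field F] [Fintype F] {Fp : MvPolynomial (Fin 4) F} (D : EQParam F Fp)

/-- Affine points of the quadric. -/
def pt (x : F × F) : Fin 4 → F :=
  (1 : F) • D.b 0 + (-(D.N x.1 x.2)) • D.b 1 + x.1 • D.b 2 + x.2 • D.b 3

/-- The complex coordinate. -/
def uu (x : F × F) : AlgebraicClosure F :=
  algebraMap F _ x.1 - D.θ * algebraMap F _ x.2

lemma uu_pow (x : F × F) : D.uu x ^ Fintype.card F =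
    algebraMap F _ x.1 - D.θ ^ Fintype.card F * algebraMap F _ x.2 := by
  have := map_sub (FiniteField.frobeniusAlgHom F (AlgebraicClosure F))
    (algebraMap F _ x.1) (D.θ * algebraMap F _ x.2)
  rw [map_mul, AlgHom.commutes, AlgHom.commutes, FiniteField.coe_frobeniusAlgHom] at this
  exact this

lemma uu_inj : Function.Injective D.uu := by
  intro x y h
  have h2 := congrArg (· ^ Fintype.card F) h
  simp only [uu_pow] at h2
  simp only [uu] at h
  have h3 : algebraMap F (AlgebraicClosure F) x.2 = algebraMap F _ y.2 := by
    apply mul_left_cancel₀ (sub_ne_zero.2 D.hθ)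
    linear_combination h - h2
  have h4 : algebraMap F (AlgebraicClosure F) x.1 = algebraMap F _ y.1 := by
    linear_combination h + D.θ * h3
  exact Prod.ext ((algebraMap F _).injective h4) ((algebraMap F _).injective h3)

lemma eval_pt (x : F × F) : eval (D.pt x) Fp = 0 := by
  rw [pt, D.heval]; ring

lemma repr_pt (x : F × F) : ⇑(D.b.repr (D.pt x)) = ![1, -(D.N x.1 x.2), x.1, x.2] := by
  have : D.pt x = D.b.equivFun.symm ![1, -(D.N x.1 x.2), x.1, x.2] := by
    simp [Module.Basis.equivFun_symm_apply, Fin.sum_univ_four, pt]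
  rw [this, ← Module.Basis.equivFun_apply, LinearEquiv.apply_symm_apply]

lemma pt_ne (x : F × F) : D.pt x ≠ 0 := fun h => by
  have := congrFun (D.repr_pt x) 0
  simp [h] at this

/-- Projective affine points. -/
def ppt (x : F × F) : Projectivization F (Fin 4 → F) := Projectivization.mk F (D.pt x) (D.pt_ne x)

/-- The point at infinity. -/
def pinf : Projectivization F (Fin 4 → F) := Projectivization.mk F (D.b 1) (D.b.ne_zero 1)

lemma ppt_inj : Function.Injective D.ppt := by
  intro x y h
  rw [ppt, ppt, Projectivization.mk_eq_mk_iff'] at h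
  obtain ⟨a, ha⟩ := h
  have h1 : ∀ i, a * D.b.repr (D.pt y) i = D.b.repr (D.pt x) i := fun i => by
    rw [← ha]; simp
  simp only [repr_pt] at h1
  have h0 := h1 0
  have h2 := h1 2
  have h3 := h1 3
  simp at h0 h2 h3
  subst h0
  exact Prod.ext (by simpa using h2.symm) (by simpa using h3.symm)

lemma pinf_notMem : D.pinf ∉ Set.range D.ppt := by
  rintro ⟨x, h⟩
  rw [ppt, pinf, Projectivization.mk_eq_mk_iff'] at h
  obtain ⟨a, ha⟩ := h
  have h0 := congrFun (D.repr_pt x) 0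
  rw [← ha] at h0
  simp at h0

lemma eval_rep_mk {f : MvPolynomial (Fin 4) F} {n : ℕ} (hf : f.IsHomogeneous n)
    (v : Fin 4 → F) (hv : v ≠ 0) :
    eval (Projectivization.mk F v hv).rep f = 0 ↔ eval v f = 0 := by
  obtain ⟨a, ha⟩ := Projectivization.exists_smul_eq_mk_rep F v hv
  rw [← ha, Units.smul_def, hom_eval_smul hf]
  simp

lemma pts_eq (D : EQParam F Fp) (hom : Fp.IsHomogeneous 2) :
    {x : Projectivization F (Fin 4 → F) | eval x.rep Fp = 0} =
      insert D.pinf (Set.range D.ppt) := by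
  ext x
  induction x using Projectivization.ind with
  | h v hv =>
  rw [Set.mem_ofPred_eq, eval_rep_mk hom]
  constructor
  · intro h
    have hsum := D.b.sum_repr v
    set c := D.b.repr v
    rw [Fin.sum_univ_four] at hsum
    rw [← hsum, D.heval] at h
    by_cases h0 : c 0 = 0
    · left
      rw [h0, zero_mul, zero_add] at h
      obtain ⟨h2, h3⟩ := D.haniso _ _ h
      rw [pinf, Projectivization.mk_eq_mk_iff']
      refine ⟨c 1, ?_⟩
      rw [← hsum, h0, h2, h3]; simp
    · right
      refine ⟨((c 0)⁻¹ * c 2, (c 0)⁻¹ * c 3), ?_⟩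
      rw [ppt, Projectivization.mk_eq_mk_iff']
      refine ⟨(c 0)⁻¹, ?_⟩
      have hs : D.N ((c 0)⁻¹ * c 2) ((c 0)⁻¹ * c 3) = (c 0)⁻¹ ^ 2 * D.N (c 2) (c 3) := by
        apply (algebraMap F (AlgebraicClosure F)).injective
        simp only [map_mul, map_pow, D.hN]
        ring
      have hs2 : -((c 0)⁻¹ ^ 2 * D.N (c 2) (c 3)) = (c 0)⁻¹ * c 1 := by
        field_simp
        linear_combination -h
      simp only [pt]
      rw [hs, hs2, ← hsum]
      simp [smul_smul, h0]
  · rintro (h | ⟨x, h⟩)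
    · rw [← eval_rep_mk hom v hv, h, pinf, eval_rep_mk hom]
      have := D.heval 0 1 0 0
      have h00 : D.N 0 0 = 0 := by
        apply (algebraMap F (AlgebraicClosure F)).injective
        simp [D.hN]
      simpa [h00] using this
    · rw [← eval_rep_mk hom v hv, ← h, ppt, eval_rep_mk hom]
      exact D.eval_pt x

lemma ncard_pts (D : EQParam F Fp) (hom : Fp.IsHomogeneous 2) :
    {x : Projectivization F (Fin 4 → F) | eval x.rep Fp = 0}.ncard = Fintype.card F ^ 2 + 1 := by
  rw [D.pts_eq hom, Set.ncard_insert_of_notMem D.pinf_notMem (Set.finite_range _),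
    Set.ncard_range_of_injective D.ppt_inj]
  simp [pow_two]


lemma poly_exists (D : EQParam F Fp) {f : MvPolynomial (Fin 4) F} (hf : f.IsHomogeneous 3) :
    ∃ P : Polynomial (AlgebraicClosure F), P.natDegree ≤ 3 * (Fintype.card F + 1) ∧
      P.coeff (3 * (Fintype.card F + 1)) =
        - (algebraMap F _ D.α) ^ 3 * algebraMap F _ (eval (D.b 1) f) ∧
      ∀ x, P.eval (D.uu x) = algebraMap F _ (eval (D.pt x) f) := by
  set q := Fintype.card F with hq
  have hq1 : 1 < q := Fintype.one_lt_card
  set g := algebraMap F (AlgebraicClosure F) with hg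
  have hd : D.θ - D.θ ^ q ≠ 0 := sub_ne_zero.2 D.hθ.symm
  let c : AlgebraicClosure F := (D.θ - D.θ ^ q)⁻¹
  let T : Polynomial (AlgebraicClosure F) := .C c * (.X ^ q - .X)
  let Z : Polynomial (AlgebraicClosure F) := .X + .C D.θ * T
  let pp : Fin 4 → Polynomial (AlgebraicClosure F) := fun i =>
    .C (g (D.b 0 i)) - .C (g D.α * g (D.b 1 i)) * .X ^ (q + 1) + .C (g (D.b 2 i)) * Z
      + .C (g (D.b 3 i)) * T
  have hTd : T.natDegree ≤ q := by
    refine (Polynomial.natDegree_C_mul_le _ _).trans ?_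
    refine (Polynomial.natDegree_sub_le _ _).trans ?_
    simp; omega
  have hZd : Z.natDegree ≤ q := by
    refine (Polynomial.natDegree_add_le _ _).trans (max_le (by simp; omega) ?_)
    exact (Polynomial.natDegree_C_mul_le _ _).trans hTd
  have hppd : ∀ i, (pp i).natDegree ≤ q + 1 := fun i => by
    refine (Polynomial.natDegree_add_le _ _).trans (max_le ?_ ?_)
    · refine (Polynomial.natDegree_add_le _ _).trans (max_le ?_ ?_)
      · refine (Polynomial.natDegree_sub_le _ _).trans (max_le (by simp) ?_)
        exact Polynomial.natDegree_C_mul_X_pow_le _ _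
      · exact (Polynomial.natDegree_C_mul_le _ _).trans (by omega)
    · exact (Polynomial.natDegree_C_mul_le _ _).trans (by omega)
  have hppc : ∀ i, (pp i).coeff (q + 1) = - (g D.α * g (D.b 1 i)) := fun i => by
    have h1 : T.coeff (q + 1) = 0 := Polynomial.coeff_eq_zero_of_natDegree_lt (by omega)
    have h2 : Z.coeff (q + 1) = 0 := Polynomial.coeff_eq_zero_of_natDegree_lt (by omega)
    simp only [pp, Polynomial.coeff_add, Polynomial.coeff_sub, Polynomial.coeff_C_mul, h1, h2,
      Polynomial.coeff_X_pow_self, Polynomial.coeff_C_succ]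
    ring
  have hppe : ∀ i x, (pp i).eval (D.uu x) = g (D.pt x i) := fun i x => by
    have hup := D.uu_pow x
    have hT : T.eval (D.uu x) = g x.2 := by
      simp only [T, Polynomial.eval_mul, Polynomial.eval_C, Polynomial.eval_sub,
        Polynomial.eval_pow, Polynomial.eval_X, c]
      rw [hup, uu, inv_mul_eq_iff_eq_mul₀ hd]
      ring
    have hZ : Z.eval (D.uu x) = g x.1 := by
      simp only [Z, Polynomial.eval_add, Polynomial.eval_mul, Polynomial.eval_C,
        Polynomial.eval_X, hT]
      rw [uu]; ring
    have hNx := D.hN x.1 x.2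
    rw [← D.uu_pow x] at hNx
    change _ = _ * D.uu x * _ at hNx
    simp only [pp, Polynomial.eval_add, Polynomial.eval_sub, Polynomial.eval_mul,
      Polynomial.eval_C, Polynomial.eval_pow, Polynomial.eval_X, hT, hZ, pt, Pi.add_apply,
      Pi.smul_apply, smul_eq_mul, map_add, map_mul, map_neg, one_mul]
    rw [hNx, ← hg, ← hq]
    ring
  have h1 : f ∈ homogeneousSubmodule (Fin 4) F 3 := hf
  rw [← homogeneousSubmodule_one_pow, homogeneousSubmodule_one_eq_span_X, pow_succ, pow_two,
    Submodule.span_mul_span, Submodule.span_mul_span] at h1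
  clear hf
  induction h1 using Submodule.span_induction with
  | mem x hx =>
    obtain ⟨_, ⟨_, ⟨i, rfl⟩, _, ⟨j, rfl⟩, rfl⟩, _, ⟨k, rfl⟩, rfl⟩ := hx
    have e3 : 3 * (q + 1) = (q + 1) + (q + 1) + (q + 1) := by ring
    have d2 : (pp i * pp j).natDegree ≤ (q + 1) + (q + 1) :=
      Polynomial.natDegree_mul_le_of_le (hppd i) (hppd j)
    refine ⟨pp i * pp j * pp k, ?_, ?_, ?_⟩
    · rw [e3]
      exact Polynomial.natDegree_mul_le_of_le d2 (hppd k)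
    · rw [e3, Polynomial.coeff_mul_add_eq_of_natDegree_le d2 (hppd k),
        Polynomial.coeff_mul_add_eq_of_natDegree_le (hppd i) (hppd j), hppc, hppc, hppc]
      simp only [map_mul, eval_X]
      ring
    · intro x
      simp [hppe]
  | zero => exact ⟨0, by simp, by simp, by simp⟩
  | add x y _ _ hx hy =>
    obtain ⟨P, hP1, hP2, hP3⟩ := hx
    obtain ⟨R, hR1, hR2, hR3⟩ := hy
    refine ⟨P + R, (Polynomial.natDegree_add_le _ _).trans (max_le hP1 hR1), ?_, ?_⟩
    · rw [Polynomial.coeff_add, hP2, hR2]; simp only [map_add]; ring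
    · intro x; simp [hP3, hR3]
  | smul a x _ hx =>
    obtain ⟨P, hP1, hP2, hP3⟩ := hx
    refine ⟨Polynomial.C (g a) * P, ?_, ?_, ?_⟩
    · exact (Polynomial.natDegree_C_mul_le (g a) P).trans hP1
    · rw [Polynomial.coeff_C_mul, hP2]; simp only [smul_eval, map_mul]; ring
    · intro x; simp [hP3, smul_eval]

lemma min_dist (D : EQParam F Fp) (hom : Fp.IsHomogeneous 2) {f : MvPolynomial (Fin 4) F}
    (hf : f.IsHomogeneous 3) (hne : eval (D.b 1) f ≠ 0) :
    Fintype.card F ^ 2 + 1 - (3 * Fintype.card F + 3) ≤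
      {x ∈ {x : Projectivization F (Fin 4 → F) | eval x.rep Fp = 0} |
        eval x.rep f ≠ 0}.ncard := by
  classical
  obtain ⟨P, hP1, hP2, hP3⟩ := D.poly_exists hf
  have hP0 : P ≠ 0 := by
    rintro rfl
    simp [D.hα, hne] at hP2
  set A := {x : Projectivization F (Fin 4 → F) | eval x.rep Fp = 0} with hA
  set Bs := {x ∈ A | eval x.rep f ≠ 0}
  have hBA : Bs ⊆ A := fun x hx => hx.1
  have hfin : A.Finite := by
    rw [hA, D.pts_eq hom]
    exact (Set.finite_range _).insert _
  have hsplit := Set.ncard_sdiff_add_ncard_of_subset hBA hfin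
  rw [D.ncard_pts hom] at hsplit
  have hle : (A \ Bs).ncard ≤ 3 * (Fintype.card F + 1) := by
    let S : Finset (F × F) := Finset.univ.filter fun x => eval (D.pt x) f = 0
    have h1 : A \ Bs ⊆ D.ppt '' S := by
      rintro x ⟨hx1, hx2⟩
      have hx3 : eval x.rep f = 0 := by
        by_contra h
        exact hx2 ⟨hx1, h⟩
      rw [hA, D.pts_eq hom] at hx1
      rcases hx1 with rfl | ⟨y, rfl⟩
      · rw [pinf, eval_rep_mk hf] at hx3
        exact absurd hx3 hne
      · rw [ppt, eval_rep_mk hf] at hx3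
        exact ⟨y, by simpa [S] using hx3, rfl⟩
    have h2 : S.card ≤ P.roots.toFinset.card := by
      apply Finset.card_le_card_of_injOn D.uu
      · intro x hx
        have hx' : eval (D.pt x) f = 0 := by simpa [S] using hx
        simp [hP0, hP3, hx']
      · exact D.uu_inj.injOn
    calc (A \ Bs).ncard ≤ (D.ppt '' S).ncard := Set.ncard_le_ncard h1 (S.finite_toSet.image _)
      _ ≤ (S : Set (F × F)).ncard := Set.ncard_image_le S.finite_toSet
      _ = S.card := Set.ncard_coe_finset S
      _ ≤ _ := h2
      _ ≤ P.roots.card := Multiset.toFinset_card_le _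
      _ ≤ P.natDegree := P.card_roots'
      _ ≤ _ := hP1
  omega

/-- Evaluation of cubics at the affine points. -/
def E (D : EQParam F Fp) : homogeneousSubmodule (Fin 4) F 3 →ₗ[F] (F × F → F) :=
  (LinearMap.pi fun x => (MvPolynomial.aeval (D.pt x)).toLinearMap) ∘ₗ Submodule.subtype _

lemma E_apply (D : EQParam F Fp) (f : homogeneousSubmodule (Fin 4) F 3) (x : F × F) :
    D.E f x = eval (D.pt x) f.1 := by
  simp [E, aeval_eq_eval]

/-- Span of coordinate functions. -/
def M1 (D : EQParam F Fp) : Submodule (AlgebraicClosure F) (F × F → AlgebraicClosure F) :=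
  Submodule.span _ (Set.range fun (i : Fin 4) (x : F × F) => algebraMap F _ (D.pt x i))

lemma dual_mem (D : EQParam F Fp) (φ : (Fin 4 → F) →ₗ[F] F) :
    (fun x => algebraMap F (AlgebraicClosure F) (φ (D.pt x))) ∈ D.M1 := by
  have : (fun x => algebraMap F (AlgebraicClosure F) (φ (D.pt x))) =
      ∑ i, algebraMap F (AlgebraicClosure F) (φ (fun j => if i = j then 1 else 0)) •
        (fun (x : F × F) => algebraMap F (AlgebraicClosure F) (D.pt x i)) := by
    ext x
    rw [LinearMap.pi_apply_eq_sum_univ φ (D.pt x)]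
    simp only [Finset.sum_apply, Pi.smul_apply, smul_eq_mul, map_sum, map_mul]
    exact Finset.sum_congr rfl fun i _ => mul_comm _ _
  rw [this]
  exact Submodule.sum_mem _ fun i _ => Submodule.smul_mem _ _ (Submodule.subset_span ⟨i, rfl⟩)

lemma small_mem (D : EQParam F Fp) (a c : ℕ) (ha : a ≤ 1) (hc : c ≤ 1) :
    D.uu ^ (a + Fintype.card F * c) ∈ D.M1 := by
  have h0 := D.dual_mem (D.b.coord 0)
  have h1 := D.dual_mem (D.b.coord 1)
  have h2 := D.dual_mem (D.b.coord 2)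
  have h3 := D.dual_mem (D.b.coord 3)
  simp only [Module.Basis.coord_apply, repr_pt] at h0 h1 h2 h3
  simp only [Matrix.cons_val, map_one, map_neg] at h0 h1 h2 h3
  interval_cases a <;> interval_cases c
  · convert h0 using 1
    ext x; simp
  · convert D.M1.sub_mem h2 (D.M1.smul_mem (D.θ ^ Fintype.card F) h3) using 1
    ext x
    simp [uu_pow]
  · convert D.M1.sub_mem h2 (D.M1.smul_mem D.θ h3) using 1
    ext x
    simp [uu]
  · convert D.M1.smul_mem (-(algebraMap F _ D.α)⁻¹) h1 using 1
    ext x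
    have hα : algebraMap F (AlgebraicClosure F) D.α ≠ 0 := by simpa using D.hα
    simp only [Pi.pow_apply, Pi.smul_apply, D.hN, smul_eq_mul, mul_one, pow_add, uu_pow, pow_one]
    rw [uu]
    field_simp

lemma pow_mem (D : EQParam F Fp) (i j : Fin 4) :
    D.uu ^ (i.1 + Fintype.card F * j.1) ∈ D.M1 * D.M1 * D.M1 := by
  have split : ∀ i : Fin 4, ∃ a b c : ℕ, a ≤ 1 ∧ b ≤ 1 ∧ c ≤ 1 ∧ i.1 = a + b + c := by
    intro i
    fin_cases i
    · exact ⟨0, 0, 0, by simp⟩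
    · exact ⟨1, 0, 0, by simp⟩
    · exact ⟨1, 1, 0, by simp⟩
    · exact ⟨1, 1, 1, by simp⟩
  obtain ⟨a, b, c, ha, hb, hc, hi⟩ := split i
  obtain ⟨a', b', c', ha', hb', hc', hj⟩ := split j
  rw [hi, hj]
  have : D.uu ^ (a + b + c + Fintype.card F * (a' + b' + c')) =
      D.uu ^ (a + Fintype.card F * a') * D.uu ^ (b + Fintype.card F * b') *
        D.uu ^ (c + Fintype.card F * c') := by
    rw [← pow_add, ← pow_add]; congr 1; ring
  rw [this]
  exact Submodule.mul_mem_mul (Submodule.mul_mem_mul (D.small_mem _ _ ha ha')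
    (D.small_mem _ _ hb hb')) (D.small_mem _ _ hc hc')

lemma indep (D : EQParam F Fp) (hq : 5 ≤ Fintype.card F) :
    LinearIndependent (AlgebraicClosure F)
      (fun ij : Fin 4 × Fin 4 => D.uu ^ (ij.1.1 + Fintype.card F * ij.2.1)) := by
  classical
  rw [Fintype.linearIndependent_iff]
  intro g hg
  set q := Fintype.card F
  let P : Polynomial (AlgebraicClosure F) :=
    ∑ ij : Fin 4 × Fin 4, Polynomial.monomial (ij.1.1 + q * ij.2.1) (g ij)
  have hdeg : P.natDegree ≤ 3 * q + 3 := by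
    apply Polynomial.natDegree_sum_le_of_forall_le
    intro ij _
    refine (Polynomial.natDegree_monomial_le _).trans ?_
    have := ij.1.2
    have : ij.2.1 ≤ 3 := by omega
    nlinarith
  have hP : P = 0 := by
    apply Polynomial.eq_zero_of_natDegree_lt_card_of_eval_eq_zero' _ (Finset.univ.image D.uu)
    · intro y hy
      obtain ⟨x, -, rfl⟩ := Finset.mem_image.1 hy
      have := congrFun hg x
      simpa [P, Polynomial.eval_finsetSum] using this
    · rw [Finset.card_image_of_injective _ D.uu_inj, Finset.card_univ, Fintype.card_prod]
      nlinarith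
  intro ij
  have hc := congrArg (fun p => Polynomial.coeff p (ij.1.1 + q * ij.2.1)) hP
  simp only [P, Polynomial.finsetSum_coeff, Polynomial.coeff_monomial,
    Polynomial.coeff_zero] at hc
  rw [Finset.sum_eq_single ij] at hc
  · simpa using hc
  · intro kl _ hne
    rw [if_neg]
    intro h
    apply hne
    have k1 : kl.1.1 < q := by omega
    have k2 : ij.1.1 < q := by omega
    have hm := congrArg (· % q) h
    simp only [Nat.add_mul_mod_self_left, Nat.mod_eq_of_lt k1, Nat.mod_eq_of_lt k2] at hm
    have hm2 : q * kl.2.1 = q * ij.2.1 := by omega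
    have hm3 := Nat.eq_of_mul_eq_mul_left (by omega) hm2
    exact Prod.ext (Fin.ext hm) (Fin.ext hm3)
  · simp

lemma rank_E (D : EQParam F Fp) (hq : 5 ≤ Fintype.card F) :
    16 ≤ Module.finrank F (LinearMap.range D.E) := by
  let B := Module.finBasis F (LinearMap.range D.E)
  let ι : (F × F → F) → (F × F → AlgebraicClosure F) := fun h x => algebraMap F _ (h x)
  let W : Submodule (AlgebraicClosure F) (F × F → AlgebraicClosure F) :=
    Submodule.span _ (Set.range fun k => ι (B k))
  have hW : Module.finrank (AlgebraicClosure F) W ≤ Module.finrank F (LinearMap.range D.E) := by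
    have := finrank_range_le_card (R := AlgebraicClosure F) (fun k => ι (B k))
    simpa [W, Set.finrank] using this
  have hsub : D.M1 * D.M1 * D.M1 ≤ W := by
    rw [M1, Submodule.span_mul_span, Submodule.span_mul_span, Submodule.span_le]
    rintro _ ⟨_, ⟨_, ⟨i, rfl⟩, _, ⟨j, rfl⟩, rfl⟩, _, ⟨k, rfl⟩, rfl⟩
    let f : homogeneousSubmodule (Fin 4) F 3 := ⟨X i * X j * X k,
      ((isHomogeneous_X F i).mul (isHomogeneous_X F j)).mul (isHomogeneous_X F k)⟩
    let r : LinearMap.range D.E := ⟨D.E f, f, rfl⟩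
    have hr := B.sum_repr r
    have : ((fun x => algebraMap F (AlgebraicClosure F) (D.pt x i)) *
        (fun x => algebraMap F (AlgebraicClosure F) (D.pt x j)) *
        (fun x => algebraMap F (AlgebraicClosure F) (D.pt x k))) =
        ∑ l, algebraMap F (AlgebraicClosure F) (B.repr r l) • ι (B l) := by
      ext x
      have h1 := congrFun (congrArg Subtype.val hr) x
      have h2 : r.1 x = D.pt x i * D.pt x j * D.pt x k := by
        simp [r, E_apply, f]
      rw [h2] at h1
      simp only [Pi.mul_apply]
      rw [← map_mul, ← map_mul, ← h1]
      simp only [ι, Finset.sum_apply, Submodule.coe_sum, map_sum, Submodule.coe_smul,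
        Pi.smul_apply, smul_eq_mul, map_mul]
    change _ * _ * _ ∈ W
    rw [this]
    exact Submodule.sum_mem _ fun l _ => Submodule.smul_mem _ _ (Submodule.subset_span ⟨l, rfl⟩)
  have hli : LinearIndependent (AlgebraicClosure F) (fun ij : Fin 4 × Fin 4 =>
      (⟨_, hsub (D.pow_mem ij.1 ij.2)⟩ : W)) := by
    apply LinearIndependent.of_comp W.subtype
    exact D.indep hq
  have := hli.fintype_card_le_finrank
  simp at this
  omega

end EQParam

lemma finrank_hom (F : Type) [Field F] (n : ℕ) :
    Module.finrank F (homogeneousSubmodule (Fin 4) F n) = (n + 3).choose n := by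
  rw [homogeneousSubmodule_eq_finsupp_supported,
    (AddMonoidAlgebra.supportedEquivFinsupp (R := F) (S := F) _).finrank_eq]
  have hset : {d : Fin 4 →₀ ℕ | d.degree = n} =
      ((Finset.univ : Finset (Fin 4)).finsuppAntidiag n : Set (Fin 4 →₀ ℕ)) := by
    ext d
    simp [Finsupp.degree_eq_sum]
  rw [hset]
  have := Finset.card_finsuppAntidiag_nat_eq_choose (s := (Finset.univ : Finset (Fin 4))) n
  have hc : Module.finrank F
      (((Finset.univ : Finset (Fin 4)).finsuppAntidiag n : Set (Fin 4 →₀ ℕ)) →₀ F) =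
      Fintype.card ((Finset.univ : Finset (Fin 4)).finsuppAntidiag n) :=
    Module.finrank_finsupp_self F
  rw [hc, Fintype.card_coe, this]
  congr 1
  simp
  omega

lemma final_dim {F : Type} [Field F] [Fintype F] {Fp : MvPolynomial (Fin 4) F}
    (hX : IsEllipticQuadric F Fp) (hq : 5 ≤ Fintype.card F)
    (pts : Set (Projectivization F (Fin 4 → F)))
    (hpts : pts = {x : Projectivization F (Fin 4 → F) | eval x.rep Fp = 0}) :
    Module.finrank F
      (Submodule.map (evalAt F pts) (homogeneousSubmodule (Fin 4) F 3)) = 16 ∧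
    (∀ f ∈ homogeneousSubmodule (Fin 4) F 3,
      (∀ x ∈ pts, MvPolynomial.eval x.rep f = 0) → Fp ∣ f) := by
  have hom := hX.2.1
  obtain ⟨e, he, hQ⟩ := exists_zero hX
  obtain ⟨D, -⟩ := exists_param hX e he hQ
  let H := homogeneousSubmodule (Fin 4) F 3
  have : Module.Finite F H := FiniteDimensional.of_finrank_pos (by
    rw [finrank_hom]; decide)
  let ψ : H →ₗ[F] (pts → F) := (evalAt F pts) ∘ₗ H.subtype
  have hψ : ∀ (f : H) (x : pts), ψ f x = eval x.1.rep f.1 := fun f x => by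
    simp [ψ, evalAt, aeval_eq_eval]
  have hker1 : LinearMap.ker ψ ≤ LinearMap.ker D.E := by
    intro f hf
    rw [LinearMap.mem_ker] at hf ⊢
    ext x
    rw [D.E_apply, Pi.zero_apply]
    have hx : D.ppt x ∈ pts := by
      rw [hpts, D.pts_eq hom]; right; exact ⟨x, rfl⟩
    have := congrFun hf ⟨_, hx⟩
    rw [hψ] at this
    exact (EQParam.eval_rep_mk f.2 _ _).1 this
  have hE := LinearMap.finrank_range_add_finrank_ker D.E
  have hrE := D.rank_E hq
  have h20 : Module.finrank F H = 20 := by rw [finrank_hom]; decide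
  have h4 : Module.finrank F (homogeneousSubmodule (Fin 4) F 1) = 4 := by rw [finrank_hom]; decide
  have hk4 : Module.finrank F (LinearMap.ker ψ) ≤ 4 := by
    have hk : Module.finrank F (LinearMap.ker ψ) ≤ Module.finrank F (LinearMap.ker D.E) :=
      Submodule.finrank_mono hker1
    rw [finrank_hom] at hE
    have h20' : (3 + 3).choose 3 = 20 := by decide
    omega
  let μ : homogeneousSubmodule (Fin 4) F 1 →ₗ[F] H :=
    LinearMap.codRestrict H ((LinearMap.mulLeft F Fp) ∘ₗ Submodule.subtype _) (fun l => by
      exact hom.mul l.2)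
  have hμ : Function.Injective μ := by
    intro a b hab
    have := congrArg Subtype.val hab
    exact Subtype.ext (mul_left_cancel₀ hX.1 this)
  have hr4 : Module.finrank F (LinearMap.range μ) = 4 := by
    rw [LinearMap.finrank_range_of_inj hμ, h4]
  have hμk : LinearMap.range μ ≤ LinearMap.ker ψ := by
    rintro _ ⟨l, rfl⟩
    rw [LinearMap.mem_ker]
    ext x
    rw [hψ]
    have hx : eval x.1.rep Fp = 0 := hpts.le x.2
    change eval x.1.rep (Fp * l.1) = 0
    rw [map_mul, hx, zero_mul]
  have heq : LinearMap.range μ = LinearMap.ker ψ :=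
    Submodule.eq_of_le_of_finrank_le hμk (by omega)
  constructor
  · have h1 := LinearMap.finrank_range_add_finrank_ker ψ
    rw [← heq, hr4] at h1
    have h2 : LinearMap.range ψ = Submodule.map (evalAt F pts) H := by
      rw [LinearMap.range_comp, Submodule.range_subtype]
    rw [h2] at h1
    change _ + _ = Module.finrank F H at h1
    change Module.finrank F (Submodule.map (evalAt F pts) H) = 16
    omega
  · intro f hf hv
    have hfk : (⟨f, hf⟩ : H) ∈ LinearMap.ker ψ := by
      rw [LinearMap.mem_ker]
      ext x
      rw [hψ]
      exact hv x.1 x.2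
    rw [← heq] at hfk
    obtain ⟨l, hl⟩ := hfk
    exact ⟨l.1, (congrArg Subtype.val hl).symm⟩

lemma not_primePow {n : ℕ} (h2 : 2 ∣ n) (h3 : 3 ∣ n) : ¬ IsPrimePow n := by
  rintro ⟨p, k, hp, -, rfl⟩
  have hp' := hp.nat_prime
  have a := (Nat.prime_dvd_prime_iff_eq Nat.prime_two hp').1 (Nat.prime_two.dvd_of_dvd_pow h2)
  have b := (Nat.prime_dvd_prime_iff_eq Nat.prime_three hp').1 (Nat.prime_three.dvd_of_dvd_pow h3)
  omega

/-- Parameters of the code `C_L(X, O_X(3))` on an elliptic quadric `X`, for `q ≥ 5`: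
length `q² + 1`, dimension `16` (evaluation is injective on cubics modulo multiples
of `F`), and minimum distance at least
`δ = q² + 1 - max(3q + 3, min(4q, q + 1 + 4⌊2√q⌋))`, with the indicated explicit values. -/
theorem stmt_7 (q : ℕ) (hq : IsPrimePow q) (hq5 : 5 ≤ q)
    (F : Type) [Field F] [Fintype F] (hF : Fintype.card F = q)
    (Fp : MvPolynomial (Fin 4) F) (hX : IsEllipticQuadric F Fp) :
    let pts : Set (Projectivization F (Fin 4 → F)) :=
      {x | MvPolynomial.eval x.rep Fp = 0}
    let δ : ℕ := q ^ 2 + 1 - max (3 * q + 3) (min (4 * q) (q + 1 + 4 * Nat.sqrt (4 * q)))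
    pts.ncard = q ^ 2 + 1 ∧
    Module.finrank F
      (Submodule.map (evalAt F pts) (homogeneousSubmodule (Fin 4) F 3)) = 16 ∧
    (∀ f ∈ homogeneousSubmodule (Fin 4) F 3,
      (∀ x ∈ pts, MvPolynomial.eval x.rep f = 0) → Fp ∣ f) ∧
    (∀ f ∈ homogeneousSubmodule (Fin 4) F 3,
      (∃ x ∈ pts, MvPolynomial.eval x.rep f ≠ 0) →
      δ ≤ {x ∈ pts | MvPolynomial.eval x.rep f ≠ 0}.ncard) ∧
    (5 ≤ q ∧ q ≤ 7 → δ = q ^ 2 + 1 - 4 * q) ∧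
    (8 ≤ q ∧ q ≤ 13 → δ = q ^ 2 - q - 4 * Nat.sqrt (4 * q)) ∧
    (16 ≤ q → δ = q ^ 2 - 2 - 3 * q) := by
  subst hF
  intro pts δ
  have hom := hX.2.1
  obtain ⟨e, he, hQ⟩ := exists_zero hX
  obtain ⟨D0, -⟩ := exists_param hX e he hQ
  obtain ⟨hd1, hd2⟩ := final_dim hX hq5 pts rfl
  refine ⟨D0.ncard_pts hom, hd1, hd2, ?_, ?_, ?_, ?_⟩
  · rintro f hf ⟨x, hx, hne⟩
    obtain ⟨D, hD⟩ := exists_param hX x.rep x.rep_nonzero hx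
    have h := D.min_dist hom hf (by rw [hD]; exact hne)
    refine le_trans ?_ h
    exact Nat.sub_le_sub_left (le_max_left _ _) _
  all_goals
    clear hd1 hd2 D0
    simp only [δ]
    clear δ
    generalize Fintype.card F = q at *
  · rintro ⟨h1, h2⟩
    interval_cases q
    · norm_num
    · exact absurd hq (not_primePow (by norm_num) (by norm_num))
    · norm_num
  · rintro ⟨h1, h2⟩
    interval_cases q
    any_goals norm_num
    exact absurd hq (not_primePow (by norm_num) (by norm_num))
  · intro h1
    have hs : 4 * Nat.sqrt (4 * q) ≤ 2 * q + 2 := by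
      have := Nat.sqrt_le' (4 * q)
      nlinarith
    omega
end
end

section
/- Let q be a prime power and let P be a closed point of degree 3 of P² over F_q not contained in any F_q-rational line, given by a point p ∈ P²(F_{q³}) whose Frobenius orbit {p, φ(p), φ²(p)} has exactly 3 elements, these three points being non-collinear. Let V be the F_q-vector space of homogeneous polynomials of degree 3 in F_q[x,y,z] vanishing at p. Then the evaluation code C_L(Z, L_3), obtained by evaluating the elements of V at the q² + q + 1 points of P²(F_q), has parameters [q² + q + 1, 7, q² − q − 1]: its length is q² + q + 1, its dimension is 7 (in particular dim V = 7 and the evaluation map is injective), and its minimum distance is exactly q² − q − 1. -/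
open MvPolynomial

noncomputable section


theorem aeval_scale {F S σ : Type} [Fintype σ] [Field F] [CommRing S] [Algebra F S] {n : ℕ}
    {f : MvPolynomial σ F} (hf : f.IsHomogeneous n) (c : S) (g : σ → S) :
    aeval (fun i => c * g i) f = c ^ n * aeval g f := by
  rw [aeval_def, aeval_def, eval₂_eq', eval₂_eq', Finset.mul_sum]
  refine Finset.sum_congr rfl fun d hd => ?_
  have hd' : ∑ i, d i = n := by
    have := hf (mem_support_iff.mp hd)
    rw [← this, Finsupp.weight_apply, Finsupp.sum_fintype] <;> simp
  simp_rw [mul_pow, Finset.prod_mul_distrib]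
  rw [Finset.prod_pow_eq_pow_sum, hd']
  ring

theorem eval_scale {F σ : Type} [Fintype σ] [Field F] {n : ℕ}
    {f : MvPolynomial σ F} (hf : f.IsHomogeneous n) (c : F) (g : σ → F) :
    eval (c • g) f = c ^ n * eval g f := by
  have := aeval_scale hf c g
  rw [aeval_eq_eval] at this
  exact this

theorem proj_count {F : Type} [Field F] [Fintype F] {n : ℕ} (hn : n ≠ 0)
    {f : MvPolynomial (Fin 3) F} (hf : f.IsHomogeneous n) :
    {x : Projectivization F (Fin 3 → F) | eval x.rep f ≠ 0}.ncard * (Fintype.card F - 1)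
      + {w : Fin 3 → F | eval w f = 0}.ncard = Fintype.card F ^ 3 := by
  classical
  have h1 : {w : Fin 3 → F | eval w f ≠ 0}.ncard + {w : Fin 3 → F | eval w f = 0}.ncard
      = Fintype.card F ^ 3 := by
    have := Set.ncard_add_ncard_compl {w : Fin 3 → F | eval w f ≠ 0}
    rw [Nat.card_eq_fintype_card, Fintype.card_fun] at this
    simpa [Set.compl_ofPred] using this
  rw [← h1, ← Nat.card_coe_set_eq, ← Nat.card_coe_set_eq {w : Fin 3 → F | eval w f ≠ 0},
    ← Fintype.card_units, ← Nat.card_eq_fintype_card (α := Fˣ), ← Nat.card_prod]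
  congr 1
  refine Nat.card_congr (Equiv.ofBijective
    (fun p => ⟨(p.2 : F) • p.1.1.rep, ?_⟩) ⟨?_, ?_⟩)
  · have := p.1.2
    simp only [Set.mem_ofPred_eq] at this ⊢
    rw [eval_scale hf]
    exact mul_ne_zero (pow_ne_zero _ p.2.ne_zero) this
  · rintro ⟨⟨x, hx⟩, u⟩ ⟨⟨y, hy⟩, u'⟩ h
    simp only [Subtype.mk.injEq] at h
    have hxy : x = y := by
      rw [← x.mk_rep, ← y.mk_rep, Projectivization.mk_eq_mk_iff]
      refine ⟨u⁻¹ * u', ?_⟩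
      rw [mul_smul, Units.smul_def u', ← h, Units.smul_def, smul_smul]
      simp
    subst hxy
    have := smul_left_injective F x.rep_nonzero h
    simp [Units.ext_iff, this]
  · rintro ⟨w, hw⟩
    simp only [Set.mem_ofPred_eq] at hw
    have hw0 : w ≠ 0 := by
      rintro rfl
      apply hw
      have := eval_scale hf 0 (0 : Fin 3 → F)
      simpa [hn] using this
    obtain ⟨a, ha⟩ := Projectivization.exists_smul_eq_mk_rep F w hw0
    refine ⟨⟨⟨Projectivization.mk F w hw0, ?_⟩, a⁻¹⟩, ?_⟩
    · simp only [Set.mem_ofPred_eq]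
      rw [← ha, Units.smul_def, eval_scale hf]
      exact mul_ne_zero (pow_ne_zero _ a.ne_zero) hw
    · simp only [Subtype.mk.injEq]
      rw [← ha, Units.smul_def, smul_smul]
      simp

/-- no linear factor -/
def NoLin {F : Type} [Field F] (f : MvPolynomial (Fin 3) F) : Prop :=
  ∀ l : MvPolynomial (Fin 3) F, l.IsHomogeneous 1 → ¬ l ∣ f

theorem binary_dvd {F : Type} [Field F] {n : ℕ} {c : MvPolynomial (Fin 2) F}
    (hc : c.IsHomogeneous n) {w : Fin 2 → F} (hw : w ≠ 0) (h : eval w c = 0) :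
    (C (w 1) * X 0 - C (w 0) * X 1) ∣ c := by
  set l : MvPolynomial (Fin 2) F := C (w 1) * X 0 - C (w 0) * X 1 with hl
  rw [← Ideal.mem_span_singleton, ← Ideal.Quotient.eq_zero_iff_mem]
  set I := Ideal.span {l}
  have key : ∃ u : MvPolynomial (Fin 2) F ⧸ I, ∀ i,
      Ideal.Quotient.mk I (X i) = u * algebraMap F _ (w i) := by
    have hmk : Ideal.Quotient.mk I (C (w 1) * X 0) = Ideal.Quotient.mk I (C (w 0) * X 1) := by
      rw [Ideal.Quotient.mk_eq_mk_iff_sub_mem]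
      exact Ideal.mem_span_singleton_self _
    have hC : ∀ a : F, algebraMap F (MvPolynomial (Fin 2) F ⧸ I) a = Ideal.Quotient.mk I (C a) :=
      fun a => rfl
    by_cases h0 : w 0 = 0
    · have h1 : w 1 ≠ 0 := by
        intro h1; apply hw; ext i; fin_cases i <;> simp [h0, h1]
      refine ⟨Ideal.Quotient.mk I (C (w 1)⁻¹ * X 1), fun i => ?_⟩
      rw [hC, ← map_mul]
      fin_cases i
      · have : Ideal.Quotient.mk I (C (w 1)⁻¹ * (C (w 1) * X 0)) =
          Ideal.Quotient.mk I (C (w 1)⁻¹ * (C (w 0) * X 1)) := by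
          rw [map_mul, hmk, ← map_mul]
        rw [← mul_assoc, ← C_mul, inv_mul_cancel₀ h1, C_1, one_mul] at this
        change Ideal.Quotient.mk I (X 0) = _
        rw [this]
        congr 1
        simp only [Fin.zero_eta]; ring
      · change Ideal.Quotient.mk I (X 1) = Ideal.Quotient.mk I (C (w 1)⁻¹ * X 1 * C (w 1))
        rw [mul_right_comm, ← C_mul, inv_mul_cancel₀ h1, C_1, one_mul]
    · refine ⟨Ideal.Quotient.mk I (C (w 0)⁻¹ * X 0), fun i => ?_⟩
      rw [hC, ← map_mul]
      fin_cases i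
      · change Ideal.Quotient.mk I (X 0) = Ideal.Quotient.mk I (C (w 0)⁻¹ * X 0 * C (w 0))
        rw [mul_right_comm, ← C_mul, inv_mul_cancel₀ h0, C_1, one_mul]
      · have : Ideal.Quotient.mk I (C (w 0)⁻¹ * (C (w 0) * X 1)) =
          Ideal.Quotient.mk I (C (w 0)⁻¹ * (C (w 1) * X 0)) := by
          rw [map_mul, ← hmk, ← map_mul]
        rw [← mul_assoc, ← C_mul, inv_mul_cancel₀ h0, C_1, one_mul] at this
        change Ideal.Quotient.mk I (X 1) = _
        rw [this]
        congr 1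
        simp only [Fin.mk_one]; ring
  obtain ⟨u, hu⟩ := key
  have h2 : Ideal.Quotient.mk I c = aeval (fun i => Ideal.Quotient.mk I (X i)) c := by
    have := aeval_unique (Ideal.Quotient.mkₐ F I)
    exact DFunLike.congr_fun this c
  rw [h2]
  simp_rw [hu]
  rw [aeval_scale hc]
  have h3 : aeval (fun i => algebraMap F (MvPolynomial (Fin 2) F ⧸ I) (w i)) c
      = algebraMap F _ (eval w c) := by
    rw [← aeval_eq_eval]
    exact (aeval_algebraMap_apply (MvPolynomial (Fin 2) F ⧸ I) w c)
  rw [h3, h, map_zero, mul_zero]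

/-- linear substitution -/
noncomputable def lsub {F : Type} [Field F] (A : Matrix (Fin 3) (Fin 3) F) :
    MvPolynomial (Fin 3) F →ₐ[F] MvPolynomial (Fin 3) F :=
  aeval fun i => ∑ j, C (A i j) * X j

theorem lsub_hom {F : Type} [Field F] (A : Matrix (Fin 3) (Fin 3) F) {n : ℕ}
    {f : MvPolynomial (Fin 3) F} (hf : f.IsHomogeneous n) : (lsub A f).IsHomogeneous n := by
  have := hf.aeval (fun i => ∑ j, C (A i j) * X j) (n := 1) (fun i =>
    IsHomogeneous.sum _ _ _ fun j _ => by
      simpa using (isHomogeneous_C (Fin 3) (A i j)).mul (isHomogeneous_X F j))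
  simpa [lsub] using this

theorem aeval_lsub {F S : Type} [Field F] [CommRing S] [Algebra F S]
    (A : Matrix (Fin 3) (Fin 3) F) (v : Fin 3 → S) (f : MvPolynomial (Fin 3) F) :
    aeval v (lsub A f) = aeval (fun i => ∑ j, algebraMap F S (A i j) * v j) f := by
  have : (aeval v).comp (lsub A) =
      (aeval (fun i => ∑ j, algebraMap F S (A i j) * v j) : MvPolynomial (Fin 3) F →ₐ[F] S) := by
    ext i
    simp [lsub]
  exact DFunLike.congr_fun this f

theorem eval_lsub {F : Type} [Field F]
    (A : Matrix (Fin 3) (Fin 3) F) (v : Fin 3 → F) (f : MvPolynomial (Fin 3) F) :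
    eval v (lsub A f) = eval (A.mulVec v) f := by
  have := aeval_lsub A v f
  rw [aeval_eq_eval] at this
  exact this

theorem lsub_lsub {F : Type} [Field F]
    {A B : Matrix (Fin 3) (Fin 3) F} (h : B * A = 1) (f : MvPolynomial (Fin 3) F) :
    lsub A (lsub B f) = f := by
  have : (lsub A).comp (lsub B) = AlgHom.id F _ := by
    apply MvPolynomial.algHom_ext
    intro i
    have h1 : ∀ k, ∑ j, B i j * A j k = (1 : Matrix (Fin 3) (Fin 3) F) i k := by
      intro k; rw [← h, Matrix.mul_apply]
    simp only [lsub, AlgHom.comp_apply, aeval_X, map_sum, map_mul, AlgHom.id_apply,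
      Finset.mul_sum]
    rw [Finset.sum_comm]
    have : ∀ k, ∑ j, aeval (fun i => ∑ j, C (A i j) * X j) (C (B i j)) * (C (A j k) * X k)
        = C ((1 : Matrix (Fin 3) (Fin 3) F) i k) * (X k : MvPolynomial (Fin 3) F) := by
      intro k
      rw [← h1 k, map_sum, Finset.sum_mul]
      refine Finset.sum_congr rfl fun j _ => ?_
      rw [algHom_C, algebraMap_eq, C_mul, mul_assoc]
    rw [Finset.sum_congr rfl fun k _ => this k]
    simp [Matrix.one_apply]
  exact DFunLike.congr_fun this f

theorem NoLin.lsub {F : Type} [Field F]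
    {A B : Matrix (Fin 3) (Fin 3) F} (h : B * A = 1) {f : MvPolynomial (Fin 3) F}
    (hf : NoLin f) : NoLin (lsub A f) := by
  intro l hl hd
  apply hf (_root_.lsub B l) (lsub_hom B hl)
  have := map_dvd (_root_.lsub B) hd
  rwa [lsub_lsub (mul_eq_one_comm.mp h)] at this

theorem card_lsub {F : Type} [Field F]
    {A B : Matrix (Fin 3) (Fin 3) F} (h : B * A = 1) (f : MvPolynomial (Fin 3) F) :
    {w : Fin 3 → F | eval w (lsub A f) = 0}.ncard = {w : Fin 3 → F | eval w f = 0}.ncard := by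
  have h' := mul_eq_one_comm.mp h
  refine Set.ncard_congr (fun w _ => A.mulVec w) ?_ ?_ ?_
  · intro w hw
    simpa [eval_lsub] using hw
  · intro a b _ _ hab
    have := congrArg B.mulVec hab
    simpa [Matrix.mulVec_mulVec, h] using this
  · intro w hw
    refine ⟨B.mulVec w, ?_, ?_⟩
    · simpa [eval_lsub, Matrix.mulVec_mulVec, h'] using hw
    · simp [Matrix.mulVec_mulVec, h']

theorem lin_form {F σ : Type} [Fintype σ] [Field F] {l : MvPolynomial σ F}
    (hl : l.IsHomogeneous 1) : ∃ c : σ → F, l = ∑ i, C (c i) * X i := by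
  have h : l ∈ homogeneousSubmodule σ F 1 := hl
  rw [homogeneousSubmodule_one_eq_span_X, Submodule.mem_span_range_iff_exists_fun] at h
  obtain ⟨c, hc⟩ := h
  exact ⟨c, by simp [← hc, smul_eq_C_mul]⟩

theorem fiber_ne {F : Type} [Field F] {n : ℕ} {f : MvPolynomial (Fin 3) F}
    (hf : f.IsHomogeneous n) (hN : NoLin f) {w : Fin 2 → F} (hw : w ≠ 0) :
    Polynomial.map (eval w) (finSuccEquiv F 2 f) ≠ 0 := by
  intro h
  set l : MvPolynomial (Fin 2) F := C (w 1) * X 0 - C (w 0) * X 1 with hl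
  have h1 : Polynomial.C l ∣ finSuccEquiv F 2 f := by
    rw [Polynomial.C_dvd_iff_dvd_coeff]
    intro i
    have hi : eval w ((finSuccEquiv F 2 f).coeff i) = 0 := by
      rw [← Polynomial.coeff_map, h, Polynomial.coeff_zero]
    by_cases hin : i ≤ n
    · exact binary_dvd (hf.finSuccEquiv_coeff_isHomogeneous i (n - i) (by omega)) hw hi
    · rw [Polynomial.coeff_eq_zero_of_natDegree_lt]
      · exact dvd_zero _
      · rw [natDegree_finSuccEquiv]
        have := degreeOf_le_totalDegree f 0
        have := hf.totalDegree_le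
        omega
  have h2 := map_dvd (finSuccEquiv F 2).symm h1
  rw [AlgEquiv.symm_apply_apply] at h2
  refine hN _ ?_ h2
  have : (finSuccEquiv F 2).symm (Polynomial.C l) = rename Fin.succ l := by
    rw [AlgEquiv.symm_apply_eq, hl]
    simp only [map_sub, map_mul, rename_C, rename_X, finSuccEquiv_X_succ]
    simp [finSuccEquiv_apply]
  rw [this]
  apply IsHomogeneous.rename_isHomogeneous
  apply IsHomogeneous.sub
  · simpa using (isHomogeneous_C (Fin 2) (w 1)).mul (isHomogeneous_X F 0)
  · simpa using (isHomogeneous_C (Fin 2) (w 0)).mul (isHomogeneous_X F 1)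

theorem lin_ker {F : Type} [Field F] [Fintype F] [DecidableEq F] {L : MvPolynomial (Fin 2) F}
    (hL : L.IsHomogeneous 1) :
    Fintype.card F ≤ (Finset.univ.filter fun w : Fin 2 → F => eval w L = 0).card := by
  have : ∃ w : Fin 2 → F, w ≠ 0 ∧ eval w L = 0 := by
    obtain ⟨c, rfl⟩ := lin_form hL
    by_cases h : c = 0
    · exact ⟨![1, 0], by intro h; simpa using congrFun h 0, by simp [h]⟩
    · refine ⟨![c 1, - c 0], ?_, by simp [Fin.sum_univ_two]; ring⟩
      intro h'
      apply h
      have h0 := congrFun h' 0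
      have h1 := congrFun h' 1
      ext i; fin_cases i
      · simpa using h1
      · simpa using h0
  obtain ⟨w, hw, h⟩ := this
  rw [← Finset.card_univ]
  refine Finset.card_le_card_of_injOn (fun t => t • w) ?_ ?_
  · intro t _
    simp [eval_scale hL, h]
  · intro a _ b _ hab
    exact smul_left_injective F hw hab

theorem count_aux {F : Type} [Field F] [Fintype F] {k : ℕ} {f : MvPolynomial (Fin 3) F}
    (hf : f.IsHomogeneous (k + 2)) (hN : NoLin f)
    (h0 : eval (Fin.cons 1 0 : Fin 3 → F) f = 0) :
    {w : Fin 3 → F | eval w f = 0}.ncard + k ≤ (k + 1) * Fintype.card F ^ 2 := by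
  classical
  set q := Fintype.card F with hq
  set P := finSuccEquiv F 2 f with hP
  set L := P.coeff (k + 1) with hLdef
  have hL : L.IsHomogeneous 1 := hf.finSuccEquiv_coeff_isHomogeneous (k + 1) 1 rfl
  have hdeg : P.natDegree ≤ k + 2 := by
    rw [hP, natDegree_finSuccEquiv]
    exact (degreeOf_le_totalDegree f 0).trans hf.totalDegree_le
  have htop : P.coeff (k + 2) = 0 := by
    have h1 : (P.coeff (k + 2)).IsHomogeneous 0 :=
      hf.finSuccEquiv_coeff_isHomogeneous (k + 2) 0 rfl
    obtain ⟨c, hc⟩ : ∃ c, P.coeff (k + 2) = C c :=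
      ⟨_, totalDegree_eq_zero_iff_eq_C.mp (Nat.le_zero.mp h1.totalDegree_le)⟩
    have h2 : eval (Fin.cons 1 0 : Fin 3 → F) f = c := by
      rw [eval_eq_eval_mv_eval', Polynomial.eval_map, Polynomial.eval₂_eq_sum_range' _
        (Nat.lt_succ_of_le hdeg), Finset.sum_range_succ, hc, Finset.sum_eq_zero]
      · simp
      · intro i hi
        have hi' : i < k + 2 := Finset.mem_range.mp hi
        have hh : (P.coeff i).IsHomogeneous (k + 2 - i) :=
          hf.finSuccEquiv_coeff_isHomogeneous i (k + 2 - i) (by omega)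
        have := eval_scale hh 0 (0 : Fin 2 → F)
        rw [zero_smul, zero_pow (by omega), zero_mul] at this
        rw [this, zero_mul]
    rw [hc, ← h2, h0, C_0]
  have hdeg1 : ∀ w : Fin 2 → F, (P.map (eval w)).natDegree ≤ k + 1 := by
    intro w
    rw [Polynomial.natDegree_le_iff_coeff_eq_zero]
    intro N hNN
    rw [Polynomial.coeff_map]
    by_cases h : N = k + 2
    · rw [h, htop, map_zero]
    · rw [Polynomial.coeff_eq_zero_of_natDegree_lt (by omega), map_zero]
  have hdeg2 : ∀ w : Fin 2 → F, eval w L = 0 → (P.map (eval w)).natDegree ≤ k := by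
    intro w hw
    rw [Polynomial.natDegree_le_iff_coeff_eq_zero]
    intro N hNN
    by_cases h : N = k + 1
    · rw [h, Polynomial.coeff_map]; exact hw
    · exact Polynomial.coeff_eq_zero_of_natDegree_lt (by have := hdeg1 w; omega)
  set Z := Finset.univ.filter fun w : Fin 3 → F => eval w f = 0 with hZ
  have hZc : {w : Fin 3 → F | eval w f = 0}.ncard = Z.card := by
    rw [← Set.ncard_coe_finset]; simp [hZ]
  rw [hZc]
  have hsum : Z.card = ∑ w : Fin 2 → F, (Z.filter fun x => Fin.tail x = w).card :=
    Finset.card_eq_sum_card_fiberwise fun _ _ => Finset.mem_coe.mpr (Finset.mem_univ _)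
  have hfib : ∀ w : Fin 2 → F, (Z.filter fun x => Fin.tail x = w).card ≤
      (Finset.univ.filter fun t : F => Polynomial.eval t (P.map (eval w)) = 0).card := by
    intro w
    refine Finset.card_le_card_of_injOn (fun x => x 0) ?_ ?_
    · intro x hx
      simp only [hZ, Finset.coe_filter, Finset.mem_filter, Finset.mem_univ, true_and,
        Set.mem_ofPred_eq] at hx ⊢
      rw [hP, ← eval_eq_eval_mv_eval', ← hx.2]
      erw [Fin.cons_self_tail]
      exact hx.1
    · intro x hx y hy hxy
      simp only [Finset.coe_filter, Set.mem_ofPred_eq] at hx hy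
      have e1 := Fin.cons_self_tail x
      have e2 := Fin.cons_self_tail y
      rw [← e1, ← e2, hx.2, hy.2]
      simp only at hxy
      rw [hxy]
  have hroots : ∀ w : Fin 2 → F, w ≠ 0 →
      (Finset.univ.filter fun t : F => Polynomial.eval t (P.map (eval w)) = 0).card
        ≤ (P.map (eval w)).natDegree := by
    intro w hw
    have hne := fiber_ne hf hN hw
    refine le_trans ?_ ((Multiset.toFinset_card_le _).trans (Polynomial.card_roots' _))
    apply Finset.card_le_card
    intro t ht
    simp only [Finset.mem_filter, Finset.mem_univ, true_and] at ht
    rw [Multiset.mem_toFinset, Polynomial.mem_roots hne]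
    exact ht
  have hb : ∀ w : Fin 2 → F, (Z.filter fun x => Fin.tail x = w).card +
      (if eval w L = 0 then 1 else 0) ≤ if w = 0 then q + 1 else k + 1 := by
    intro w
    by_cases hw : w = 0
    · rw [if_pos hw]
      have h1 := (hfib w).trans (Finset.card_filter_le _ _)
      rw [Finset.card_univ] at h1
      split_ifs <;> omega
    · rw [if_neg hw]
      have h1 := (hfib w).trans (hroots w hw)
      have h2 := hdeg1 w
      split_ifs with h
      · have := hdeg2 w h
        omega
      · omega
  have hS := Finset.sum_le_sum fun w (_ : w ∈ (Finset.univ : Finset (Fin 2 → F))) => hb w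
  rw [Finset.sum_add_distrib, ← hsum, ← Finset.card_filter] at hS
  have hk := lin_ker hL
  have hR : (∑ w : Fin 2 → F, if w = 0 then q + 1 else k + 1) + (k + 1)
      = (q + 1) + (k + 1) * q ^ 2 := by
    rw [← Finset.add_sum_erase _ _ (Finset.mem_univ (0 : Fin 2 → F)), if_pos rfl,
      Finset.sum_congr rfl (g := fun _ => k + 1)
        (fun w hw => if_neg (Finset.ne_of_mem_erase hw)), Finset.sum_const,
      Finset.card_erase_of_mem (Finset.mem_univ _), Finset.card_univ, Fintype.card_fun,
      Fintype.card_fin, smul_eq_mul, ← hq]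
    have : 1 ≤ q ^ 2 := Nat.one_le_pow _ _ Fintype.card_pos
    obtain ⟨m, hm⟩ := Nat.exists_eq_add_of_le this
    rw [hm]
    simp only [Nat.add_sub_cancel_left]
    ring
  omega

theorem count_noLin {F : Type} [Field F] [Fintype F] {k : ℕ} {f : MvPolynomial (Fin 3) F}
    (hf : f.IsHomogeneous (k + 2)) (hN : NoLin f) :
    {w : Fin 3 → F | eval w f = 0}.ncard + k ≤ (k + 1) * Fintype.card F ^ 2 := by
  classical
  by_cases h : ∃ a : Fin 3 → F, a ≠ 0 ∧ eval a f = 0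
  · obtain ⟨a, ha, h0⟩ := h
    obtain ⟨A, B, hBA, hA⟩ : ∃ A B : Matrix (Fin 3) (Fin 3) F, B * A = 1 ∧
        A.mulVec (Fin.cons 1 0) = a := by
      have hc : (Fin.cons 1 0 : Fin 3 → F) ≠ 0 := by
        intro h; simpa using congrFun h 0
      suffices h : ∃ A : Matrix (Fin 3) (Fin 3) F, IsUnit A.det ∧ A.mulVec (Fin.cons 1 0) = a by
        obtain ⟨A, h1, h2⟩ := h
        exact ⟨A, A⁻¹, Matrix.nonsing_inv_mul A h1, h2⟩
      by_cases h0 : a 0 = 0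
      · by_cases h1 : a 1 = 0
        · have h2 : a 2 ≠ 0 := by
            intro h2; apply ha; ext i; fin_cases i <;> simp [h0, h1, h2]
          refine ⟨!![a 0, 1, 0; a 1, 0, 1; a 2, 0, 0], ?_, ?_⟩
          · simp [Matrix.det_fin_three, h2]
          · ext i; fin_cases i <;> simp [Matrix.mulVec, dotProduct, Fin.sum_univ_three, Fin.cons] <;> rfl
        · refine ⟨!![a 0, 1, 0; a 1, 0, 0; a 2, 0, 1], ?_, ?_⟩
          · simp [Matrix.det_fin_three, h1]
          · ext i; fin_cases i <;> simp [Matrix.mulVec, dotProduct, Fin.sum_univ_three, Fin.cons] <;> rfl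
      · refine ⟨!![a 0, 0, 0; a 1, 1, 0; a 2, 0, 1], ?_, ?_⟩
        · simp [Matrix.det_fin_three, h0]
        · ext i; fin_cases i <;> simp [Matrix.mulVec, dotProduct, Fin.sum_univ_three, Fin.cons] <;> rfl
    rw [← card_lsub hBA]
    apply count_aux (lsub_hom A hf) (hN.lsub hBA)
    rw [eval_lsub, hA, h0]
  · push Not at h
    have : {w : Fin 3 → F | eval w f = 0} ⊆ {0} := by
      intro w hw
      by_contra hw0
      exact h w hw0 hw
    have h1 := Set.ncard_le_ncard this
    rw [Set.ncard_singleton] at h1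
    have : 1 ≤ Fintype.card F ^ 2 := Nat.one_le_pow _ _ Fintype.card_pos
    nlinarith

theorem hom_factor {F : Type} [Field F] {n : ℕ} {l g : MvPolynomial (Fin 3) F}
    (hl : l.IsHomogeneous 1) (hl0 : l ≠ 0) (h : (l * g).IsHomogeneous (1 + n)) :
    g.IsHomogeneous n := by
  let _ := MvPolynomial.gradedAlgebra (σ := Fin 3) (R := F)
  have h1 := DirectSum.coe_decompose_mul_add_of_left_mem (homogeneousSubmodule (Fin 3) F)
    (i := 1) (j := n) (a := l) (b := g) hl
  rw [DirectSum.decompose_of_mem_same (homogeneousSubmodule (Fin 3) F) (x := l * g) h] at h1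
  have h2 := mul_left_cancel₀ hl0 h1
  rw [h2]
  exact (DirectSum.decompose (homogeneousSubmodule (Fin 3) F) g n).2

theorem lin_zero_of_aeval {F E : Type} [Field F] [Field E] [Algebra F E] {v : Fin 3 → E}
    (hv : LinearIndependent F v) {l : MvPolynomial (Fin 3) F}
    (hl : l.IsHomogeneous 1) (h : aeval v l = 0) : l = 0 := by
  obtain ⟨c, rfl⟩ := lin_form hl
  have := Fintype.linearIndependent_iff.mp hv c (by
    simpa [Algebra.smul_def] using h)
  simp [this]

theorem count_lin {F : Type} [Field F] [Fintype F] {l : MvPolynomial (Fin 3) F}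
    (hl : l.IsHomogeneous 1) (hl0 : l ≠ 0) :
    {w : Fin 3 → F | eval w l = 0}.ncard ≤ Fintype.card F ^ 2 := by
  classical
  have h := schwartz_zippel_totalDegree hl0 (Finset.univ : Finset F)
  rw [hl.totalDegree hl0, Fintype.piFinset_univ, Finset.card_univ] at h
  have hZc : {w : Fin 3 → F | eval w l = 0}.ncard =
      (Finset.univ.filter fun w : Fin 3 → F => eval w l = 0).card := by
    rw [← Set.ncard_coe_finset]; simp
  rw [hZc]
  have hq : (0 : ℚ≥0) < Fintype.card F := by exact_mod_cast Fintype.card_pos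
  rw [div_le_div_iff₀ (by positivity) hq] at h
  have h' : (Finset.univ.filter fun w : Fin 3 → F => eval w l = 0).card * Fintype.card F
      ≤ 1 * Fintype.card F ^ 3 := by exact_mod_cast h
  refine Nat.le_of_mul_le_mul_right (h'.trans (le_of_eq (by ring))) (Fintype.card_pos (α := F))

theorem count_cubic {F E : Type} [Field F] [Fintype F] [Field E] [Algebra F E] {v : Fin 3 → E}
    (hv : LinearIndependent F v) {f : MvPolynomial (Fin 3) F}
    (hf : f.IsHomogeneous 3) (hf0 : f ≠ 0) (h : aeval v f = 0) :
    {w : Fin 3 → F | eval w f = 0}.ncard + 1 ≤ 2 * Fintype.card F ^ 2 := by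
  classical
  by_cases hN : NoLin f
  · exact count_noLin (k := 1) hf hN
  · unfold NoLin at hN
    push Not at hN
    obtain ⟨l, hl, g, rfl⟩ := hN
    have hl0 : l ≠ 0 := left_ne_zero_of_mul hf0
    have hg0 : g ≠ 0 := right_ne_zero_of_mul hf0
    have hg : g.IsHomogeneous 2 := hom_factor hl hl0 hf
    have hgv : aeval v g = 0 := by
      rw [map_mul] at h
      exact (mul_eq_zero.mp h).resolve_left fun h => hl0 (lin_zero_of_aeval hv hl h)
    have hgN : NoLin g := by
      rintro l' hl' ⟨g', rfl⟩
      have hl'0 : l' ≠ 0 := left_ne_zero_of_mul hg0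
      have hg'0 : g' ≠ 0 := right_ne_zero_of_mul hg0
      have hg' : g'.IsHomogeneous 1 := hom_factor hl' hl'0 hg
      rw [map_mul] at hgv
      rcases mul_eq_zero.mp hgv with h | h
      · exact hl'0 (lin_zero_of_aeval hv hl' h)
      · exact hg'0 (lin_zero_of_aeval hv hg' h)
    have h1 := count_lin hl hl0
    have h2 := count_noLin (k := 0) hg hgN
    have hU : {w : Fin 3 → F | eval w (l * g) = 0} =
        {w : Fin 3 → F | eval w l = 0} ∪ {w : Fin 3 → F | eval w g = 0} := by
      ext w; simp
    have hI : 1 ≤ ({w : Fin 3 → F | eval w l = 0} ∩ {w : Fin 3 → F | eval w g = 0}).ncard := by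
      rw [Nat.one_le_iff_ne_zero, ← Nat.pos_iff_ne_zero, Set.ncard_pos]
      refine ⟨0, ?_, ?_⟩
      · simpa using eval_scale hl 0 (0 : Fin 3 → F)
      · simpa using eval_scale hg 0 (0 : Fin 3 → F)
    have h3 := Set.ncard_union_add_ncard_inter {w : Fin 3 → F | eval w l = 0}
      {w : Fin 3 → F | eval w g = 0}
    rw [hU]
    omega

theorem finrank_cubics (F : Type) [Field F] :
    Module.finrank F (homogeneousSubmodule (Fin 3) F 3) = 10 := by
  rw [homogeneousSubmodule_eq_finsupp_supported]
  have h := Module.finrank_eq_nat_card_basis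
    (basisRestrictSupport F {d : Fin 3 →₀ ℕ | d.degree = 3})
  change Module.finrank F (restrictSupport F {d : Fin 3 →₀ ℕ | d.degree = 3}) = 10
  rw [h]
  have : {d : Fin 3 →₀ ℕ | d.degree = 3} =
      ((Finset.univ : Finset (Fin 3)).finsuppAntidiag 3 : Set (Fin 3 →₀ ℕ)) := by
    ext d
    simp [Finset.mem_finsuppAntidiag, Finsupp.degree_eq_sum]
  rw [this, Nat.card_coe_set_eq, Set.ncard_coe_finset, Finset.card_finsuppAntidiag_nat_eq_choose]
  · decide

theorem exists_coords {F E : Type} [Field F] [Fintype F] [Field E] [Fintype E] [Algebra F E]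
    (hfr : Module.finrank F E = 3) {v : Fin 3 → E} (hv : LinearIndependent F v) :
    ∃ (A B : Matrix (Fin 3) (Fin 3) F) (t : E) (b : Module.Basis (Fin 3) F E), B * A = 1 ∧
      (∀ i, b i = t ^ (i : ℕ)) ∧ ∀ i, ∑ j, algebraMap F E (A i j) * v j = t ^ (i : ℕ) := by
  classical
  let pb := Field.powerBasisOfFiniteOfSeparable F E
  have hd : pb.dim = 3 := by rw [← pb.finrank, hfr]
  let b := pb.basis.reindex (finCongr hd)
  let bv := basisOfLinearIndependentOfCardEqFinrank hv (by simp [hfr])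
  have hb : ∀ i, b i = pb.gen ^ (i : ℕ) := by intro i; simp [b]
  refine ⟨(bv.toMatrix b).transpose, (b.toMatrix bv).transpose, pb.gen, b, ?_, hb, ?_⟩
  · rw [← Matrix.transpose_mul, Module.Basis.toMatrix_mul_toMatrix_flip, Matrix.transpose_one]
  · intro i
    have := bv.sum_repr (b i)
    rw [hb] at this
    rw [← this]
    refine Finset.sum_congr rfl fun j _ => ?_
    rw [Algebra.smul_def]
    simp [Module.Basis.toMatrix_apply, bv, hb]

theorem finrank_seven {F E : Type} [Field F] [Fintype F] [Field E] [Fintype E] [Algebra F E]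
    (hfr : Module.finrank F E = 3) {v : Fin 3 → E} (hv : LinearIndependent F v) :
    Module.finrank F
      ↥(homogeneousSubmodule (Fin 3) F 3 ⊓
          LinearMap.ker (MvPolynomial.aeval (R := F) v).toLinearMap) = 7 := by
  obtain ⟨A, B, t, b, hBA, hb, hA⟩ := exists_coords hfr hv
  set H := homogeneousSubmodule (Fin 3) F 3
  have : Module.Finite F H := Module.finite_of_finrank_pos (by rw [finrank_cubics]; norm_num)
  set φ : H →ₗ[F] E := (MvPolynomial.aeval (R := F) v).toLinearMap.domRestrict H with hφ
  have hr : LinearMap.range φ = ⊤ := by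
    rw [LinearMap.range_eq_top]
    intro e
    refine ⟨⟨lsub A (∑ i, C (b.repr e i) * (X 0 ^ 2 * X i)), ?_⟩, ?_⟩
    · apply lsub_hom
      apply IsHomogeneous.sum
      intro i _
      apply IsHomogeneous.C_mul
      exact ((isHomogeneous_X F (0 : Fin 3)).pow 2).mul (isHomogeneous_X F i)
    · change aeval v (lsub A _) = e
      rw [aeval_lsub]
      simp only [hA]
      conv_rhs => rw [← b.sum_repr e]
      simp [Algebra.smul_def, hb]
  have h1 := LinearMap.finrank_range_add_finrank_ker φ
  rw [hr, finrank_top, hfr, finrank_cubics] at h1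
  rw [← Submodule.map_comap_subtype]
  have h2 : Submodule.comap H.subtype (LinearMap.ker (MvPolynomial.aeval (R := F) v).toLinearMap)
      = LinearMap.ker φ := by
    ext x; simp [hφ]
  rw [h2]
  have h3 : Module.finrank F (Submodule.map H.subtype (LinearMap.ker φ)) =
      Module.finrank F (LinearMap.ker φ) :=
    (Submodule.equivMapOfInjective H.subtype H.injective_subtype _).finrank_eq.symm
  omega

theorem exists_aniso (F : Type) [Field F] [Fintype F] : ∃ c : F, ∀ t : F, t ^ 2 - t - c ≠ 0 := by
  by_contra h
  push Not at h
  have hs : Function.Surjective fun t : F => t ^ 2 - t := by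
    intro c
    obtain ⟨t, ht⟩ := h c
    exact ⟨t, sub_eq_zero.mp ht⟩
  have hi := Finite.injective_iff_surjective.mpr hs
  have : (0 : F) = 1 := hi (by simp)
  exact zero_ne_one this

theorem count_example {F : Type} [Field F] [Fintype F] {c : F} (hc : ∀ t : F, t ^ 2 - t - c ≠ 0) :
    {w : Fin 3 → F | eval w ((X 2 - X 1 - C c * X 0) * (X 1 ^ 2 - X 0 * X 2) :
      MvPolynomial (Fin 3) F) = 0}.ncard + 1 = 2 * Fintype.card F ^ 2 := by
  classical
  set S : Set (Fin 3 → F) := {w | w 2 - w 1 - c * w 0 = 0}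
  set T : Set (Fin 3 → F) := {w | w 1 ^ 2 - w 0 * w 2 = 0}
  have hU : {w : Fin 3 → F | eval w ((X 2 - X 1 - C c * X 0) * (X 1 ^ 2 - X 0 * X 2) :
      MvPolynomial (Fin 3) F) = 0} = S ∪ T := by
    ext w; simp [S, T]
  have hI : S ∩ T = {0} := by
    ext w
    simp only [S, T, Set.mem_inter_iff, Set.mem_ofPred_eq, Set.mem_singleton_iff]
    constructor
    · rintro ⟨h1, h2⟩
      have h0 : w 0 = 0 := by
        by_contra h0
        apply hc (w 1 / w 0)
        field_simp
        linear_combination h2 + w 0 * h1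
      have h1' : w 1 = 0 := by
        rw [h0] at h2; simpa using h2
      have h2' : w 2 = 0 := by
        rw [h0, h1'] at h1; simpa using h1
      ext i; fin_cases i <;> simp [h0, h1', h2']
    · rintro rfl; simp
  have hS : S.ncard = Fintype.card F ^ 2 := by
    have : S = Set.range fun p : F × F => ![p.1, p.2, p.2 + c * p.1] := by
      ext w
      simp only [S, Set.mem_ofPred_eq, Set.mem_range]
      constructor
      · intro h
        refine ⟨(w 0, w 1), ?_⟩
        ext i; fin_cases i
        · simp
        · simp
        · simp; linear_combination -h
      · rintro ⟨p, rfl⟩; simp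
    rw [this, ← Nat.card_coe_set_eq, Nat.card_range_of_injective, Nat.card_prod,
      Nat.card_eq_fintype_card, sq]
    rintro ⟨a, b⟩ ⟨a', b'⟩ h
    have h0 := congrFun h 0
    have h1 := congrFun h 1
    simp at h0 h1
    simp [h0, h1]
  have hT : T.ncard = Fintype.card F ^ 2 := by
    have : T = Set.range fun p : F × F =>
        if p.1 = 0 then ![0, 0, p.2] else ![p.1, p.2, p.2 ^ 2 / p.1] := by
      ext w
      simp only [T, Set.mem_ofPred_eq, Set.mem_range]
      constructor
      · intro h
        by_cases h0 : w 0 = 0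
        · have h1' : w 1 = 0 := by
            rw [h0] at h; simpa using h
          refine ⟨(0, w 2), ?_⟩
          ext i; fin_cases i <;> simp [h0, h1']
        · refine ⟨(w 0, w 1), ?_⟩
          simp only [h0, if_false]
          ext i; fin_cases i
          · simp
          · simp
          · simp; field_simp; linear_combination h
      · rintro ⟨p, rfl⟩
        by_cases h0 : p.1 = 0
        · simp [h0]
        · simp [h0]; field_simp; ring
    rw [this, ← Nat.card_coe_set_eq, Nat.card_range_of_injective, Nat.card_prod,
      Nat.card_eq_fintype_card, sq]
    rintro ⟨a, b⟩ ⟨a', b'⟩ h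
    have h0 := congrFun h 0
    have h1 := congrFun h 1
    have h2 := congrFun h 2
    by_cases ha : a = 0 <;> by_cases ha' : a' = 0 <;> simp [ha, ha'] at h0 h1 h2
    · simp [ha, ha', h2]
    · exact absurd h0.symm ha'
    · simp [h0, h1]
  have h3 := Set.ncard_union_add_ncard_inter S T
  rw [hI, Set.ncard_singleton] at h3
  rw [hU, h3, hS, hT]
  ring

theorem indep_of_conj {F E : Type} [Field F] [Fintype F] [Field E] [Algebra F E] {q : ℕ}
    (hF : Fintype.card F = q) {v : Fin 3 → E}
    (hv : LinearIndependent E ![v, fun i => v i ^ q, fun i => v i ^ q ^ 2]) :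
    LinearIndependent F v := by
  classical
  rw [Fintype.linearIndependent_iff]
  intro g hg
  let M : Matrix (Fin 3) (Fin 3) E := Matrix.of ![v, fun i => v i ^ q, fun i => v i ^ q ^ 2]
  have hM : IsUnit M := Matrix.linearIndependent_rows_iff_isUnit.mp hv
  have h0 : ∑ i, v i * algebraMap F E (g i) = 0 := by
    rw [← hg]
    exact Finset.sum_congr rfl fun i _ => by rw [Algebra.smul_def, mul_comm]
  let φ := FiniteField.frobeniusAlgHom F E
  have hφ : ∀ x, φ x = x ^ q := by intro x; simp [φ, hF]
  have h1 : ∑ i, v i ^ q * algebraMap F E (g i) = 0 := by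
    have := congrArg φ h0
    rw [map_sum, map_zero] at this
    rw [← this]
    refine Finset.sum_congr rfl fun i _ => ?_
    rw [map_mul, AlgHom.commutes, hφ]
  have h2 : ∑ i, v i ^ q ^ 2 * algebraMap F E (g i) = 0 := by
    have := congrArg φ h1
    rw [map_sum, map_zero] at this
    rw [← this]
    refine Finset.sum_congr rfl fun i _ => ?_
    rw [map_mul, AlgHom.commutes, hφ, ← pow_mul, sq]
  have hMv : M.mulVec (fun i => algebraMap F E (g i)) = 0 := by
    ext i; fin_cases i
    · simpa [M, Matrix.mulVec, dotProduct] using h0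
    · simpa [M, Matrix.mulVec, dotProduct] using h1
    · simpa [M, Matrix.mulVec, dotProduct] using h2
  have hz := Matrix.mulVec_injective_of_isUnit hM (hMv.trans (Matrix.mulVec_zero M).symm)
  intro i
  have := congrFun hz i
  simpa using this

/-- Parameters of the code `C_L(Z, L_3)`: evaluating the cubics through a degree-3 closed
point (not on any rational line) at the `q² + q + 1` points of `P²(F_q)` yields a code of
length `q² + q + 1`, dimension `7` (the space of such cubics has dimension `7` and the
evaluation map is injective), and minimum distance exactly `q² - q - 1`. -/
theorem stmt_12 (q : ℕ) (hq : IsPrimePow q)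
    (F E : Type) [Field F] [Fintype F] [Field E] [Fintype E] [Algebra F E]
    (hF : Fintype.card F = q) (hE : Fintype.card E = q ^ 3)
    -- `v` represents a degree-3 closed point of `P²`: its three Frobenius conjugates are
    -- pairwise distinct and non-collinear (equivalently, linearly independent).
    (v : Fin 3 → E)
    (hv : LinearIndependent E ![v, fun i => v i ^ q, fun i => v i ^ q ^ 2]) :
    Nat.card (Projectivization F (Fin 3 → F)) = q ^ 2 + q + 1 ∧
    Module.finrank F
      ↥(homogeneousSubmodule (Fin 3) F 3 ⊓
          LinearMap.ker (MvPolynomial.aeval (R := F) v).toLinearMap) = 7 ∧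
    (∀ f ∈ homogeneousSubmodule (Fin 3) F 3 ⊓
        LinearMap.ker (MvPolynomial.aeval (R := F) v).toLinearMap,
      (∀ x : Projectivization F (Fin 3 → F), MvPolynomial.eval x.rep f = 0) → f = 0) ∧
    (∀ f ∈ homogeneousSubmodule (Fin 3) F 3 ⊓
        LinearMap.ker (MvPolynomial.aeval (R := F) v).toLinearMap, f ≠ 0 →
      q ^ 2 - q - 1 ≤
        {x : Projectivization F (Fin 3 → F) | MvPolynomial.eval x.rep f ≠ 0}.ncard) ∧
    (∃ f ∈ homogeneousSubmodule (Fin 3) F 3 ⊓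
        LinearMap.ker (MvPolynomial.aeval (R := F) v).toLinearMap, f ≠ 0 ∧
      {x : Projectivization F (Fin 3 → F) | MvPolynomial.eval x.rep f ≠ 0}.ncard
        = q ^ 2 - q - 1) := by
  have hvF : LinearIndependent F v := indep_of_conj hF hv
  have hq2 : 2 ≤ q := hq.two_le
  have hfr : Module.finrank F E = 3 := by
    have h1 := Module.card_eq_pow_finrank (K := F) (V := E)
    rw [hE, hF] at h1
    exact (Nat.pow_right_injective hq2 h1).symm
  have hd : 1 ≤ q ^ 2 - q - 1 := by
    have : q * 2 ≤ q ^ 2 := by rw [sq]; exact Nat.mul_le_mul_left q hq2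
    omega
  have hmul : (q ^ 2 - q - 1) * (q - 1) + 2 * q ^ 2 = q ^ 3 + 1 := by
    obtain ⟨m, rfl⟩ := Nat.exists_eq_add_of_le hq2
    have e1 : (2 + m) ^ 2 - (2 + m) - 1 = m ^ 2 + 3 * m + 1 := by
      have : (2 + m) ^ 2 = m ^ 2 + 3 * m + 1 + 1 + (2 + m) := by ring
      omega
    have e2 : 2 + m - 1 = m + 1 := by omega
    rw [e1, e2]; ring
  have hmin : ∀ f ∈ homogeneousSubmodule (Fin 3) F 3 ⊓
        LinearMap.ker (MvPolynomial.aeval (R := F) v).toLinearMap, f ≠ 0 →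
      q ^ 2 - q - 1 ≤
        {x : Projectivization F (Fin 3 → F) | MvPolynomial.eval x.rep f ≠ 0}.ncard := by
    rintro f ⟨hf, hfv⟩ hf0
    have h1 := count_cubic hvF hf hf0 hfv
    have h2 := proj_count (by norm_num) (show f.IsHomogeneous 3 from hf)
    rw [hF] at h1 h2
    have h3 : (q ^ 2 - q - 1) * (q - 1) ≤
        {x : Projectivization F (Fin 3 → F) | MvPolynomial.eval x.rep f ≠ 0}.ncard * (q - 1) := by
      omega
    exact Nat.le_of_mul_le_mul_right h3 (by omega)
  refine ⟨?_, finrank_seven hfr hvF, ?_, hmin, ?_⟩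
  · rw [Projectivization.card_of_finrank F (Fin 3 → F) (n := 3) (by simp),
      Nat.card_eq_fintype_card, hF]
    simp [Finset.sum_range_succ]; ring
  · intro f hf h
    by_contra hf0
    have h1 := hmin f hf hf0
    have h2 : {x : Projectivization F (Fin 3 → F) | MvPolynomial.eval x.rep f ≠ 0} = ∅ := by
      ext x; simp [h x]
    rw [h2, Set.ncard_empty] at h1
    omega
  · obtain ⟨A, B, t, b, hBA, hb, hA⟩ := exists_coords hfr hvF
    obtain ⟨c, hc⟩ := exists_aniso F
    have h1 := count_example hc
    rw [← card_lsub hBA] at h1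
    set F0 : MvPolynomial (Fin 3) F := (X 2 - X 1 - C c * X 0) * (X 1 ^ 2 - X 0 * X 2) with hF0
    have hhom : (lsub A F0).IsHomogeneous 3 := by
      apply lsub_hom
      rw [hF0]
      apply IsHomogeneous.mul (m := 1) (n := 2)
      · exact ((isHomogeneous_X F _).sub (isHomogeneous_X F _)).sub
          ((isHomogeneous_X F _).C_mul c)
      · exact ((isHomogeneous_X F _).pow 2).sub ((isHomogeneous_X F _).mul (isHomogeneous_X F _))
    have h2 := proj_count (by norm_num) hhom
    rw [hF] at h1 h2
    have h3 : {x : Projectivization F (Fin 3 → F) |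
        MvPolynomial.eval x.rep (lsub A F0) ≠ 0}.ncard = q ^ 2 - q - 1 := by
      apply Nat.eq_of_mul_eq_mul_right (show 0 < q - 1 by omega)
      omega
    refine ⟨lsub A F0, ⟨hhom, ?_⟩, ?_, h3⟩
    · change aeval v (lsub A F0) = 0
      rw [aeval_lsub]
      simp only [hA]
      rw [hF0]
      simp
    · intro h0
      rw [h0] at h3
      simp at h3
      omega
end
end
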